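/- arXiv:2003.05838 — 2 statements merged into one kernel-verified Lean document; each statement's English description precedes it below -/
import Mathlib

section
/- In the model Y = Xβ* + ξ with p ≥ n and k* ≤ c·n for an absolute constant c, there exist absolute constants c', c₁, c₂, C > 0 such that with probability at least 1 − c₁e^{−c₂n}, the minimum ℓ2-norm interpolator β̂ satisfies ‖Σ^{1/2}(β̂ − β*)‖₂² ≤ C·max( ‖β*‖₂²·r_{c'n}(Σ)/n , ‖ξ‖₂²/n ). -/
open MeasureTheory ProbabilityTheory Matrix Finset
open scoped ENNReal Classical

noncomputable section

/-- Euclidean (`ℓ2`) norm of a finite real vector. -/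
def enorm2 {m : ℕ} (v : Fin m → ℝ) : ℝ := Real.sqrt (∑ i, v i ^ 2)

/-- The prediction (semi-)norm `‖Σ^{1/2} d‖₂ = √(dᵀ Σ d)`. -/
def predNorm {p : ℕ} (Sig : Matrix (Fin p) (Fin p) ℝ) (d : Fin p → ℝ) : ℝ :=
  Real.sqrt (d ⬝ᵥ Sig.mulVec d)

/-- The standard Gaussian measure `N(0, I_p)` on `ℝ^p`. -/
def stdGaussian (p : ℕ) : Measure (Fin p → ℝ) :=
  Measure.pi fun _ : Fin p => gaussianReal 0 1

/-- `Σ^{1/2} = P Λ^{1/2} Pᵀ` built from the eigendecomposition data. -/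
def covHalf (p : ℕ) (lam : ℕ → ℝ) (Porth : Matrix (Fin p) (Fin p) ℝ) :
    Matrix (Fin p) (Fin p) ℝ :=
  Porth * Matrix.diagonal (fun i : Fin p => Real.sqrt (lam ((i : ℕ) + 1))) * Porthᵀ

/-- The Gaussian law `N(0,Σ)` on `ℝ^p`, realized as the pushforward of `N(0,I_p)`
by `g ↦ Σ^{1/2} g`. -/
def mvGaussian (p : ℕ) (lam : ℕ → ℝ) (Porth : Matrix (Fin p) (Fin p) ℝ) :
    Measure (Fin p → ℝ) :=
  Measure.map (fun g => (covHalf p lam Porth).mulVec g) (stdGaussian p)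

/-- `r_k(Σ) = ∑_{i=k}^p λ_i(Σ)` (eigenvalues `1`-indexed). -/
def rsum (p : ℕ) (lam : ℕ → ℝ) (k : ℕ) : ℝ := ∑ i ∈ Finset.Icc k p, lam i

/-- The set `{k ∈ {1,…,p} : r_k(Σ)/λ_k(Σ) ≥ c₀ n}`. -/
def kstarSet (p : ℕ) (lam : ℕ → ℝ) (c0 : ℝ) (n : ℕ) : Set ℕ :=
  {k | 1 ≤ k ∧ k ≤ p ∧ c0 * n ≤ rsum p lam k / lam k}

/-- `k* = inf { k ∈ {1,…,p} : r_k(Σ)/λ_k(Σ) ≥ c₀ n }`. -/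
def kstar (p : ℕ) (lam : ℕ → ℝ) (c0 : ℝ) (n : ℕ) : ℕ := sInf (kstarSet p lam c0 n)

/-- `ρ = ‖β*‖₂ + 4‖ξ‖₂/√(r_{k*}(Σ))`. -/
def rho (p : ℕ) (lam : ℕ → ℝ) (c0 : ℝ) (n : ℕ) (βstar : Fin p → ℝ) (ξnorm : ℝ) : ℝ :=
  enorm2 βstar + 4 * ξnorm / Real.sqrt (rsum p lam (kstar p lam c0 n))

/-- `r*(η) = inf { r > 0 : ∑ᵢ min(λ_i(Σ), r²) ≤ η n r² }`. -/
def rstar (p n : ℕ) (lam : ℕ → ℝ) (η : ℝ) : ℝ :=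
  sInf {r : ℝ | 0 < r ∧ ∑ i : Fin p, min (lam ((i : ℕ) + 1)) (r ^ 2) ≤ η * n * r ^ 2}

/-- `r̄(γ) = sup { r > 0 : ∑ᵢ min(λ_i(Σ)ρ², r²) ≤ γ ‖ξ‖₂² }`. -/
def rbar (p : ℕ) (lam : ℕ → ℝ) (γ ρ ξnorm : ℝ) : ℝ :=
  sSup {r : ℝ | 0 < r ∧ ∑ i : Fin p, min (lam ((i : ℕ) + 1) * ρ ^ 2) (r ^ 2) ≤ γ * ξnorm ^ 2}

/-- `k̄ = inf { k ≥ k* : r_k(Σ) ≤ (γ/2) r_{k*}(Σ) }`, with `k̄ = p+1` if the set is empty. -/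
def kbar (p : ℕ) (lam : ℕ → ℝ) (c0 : ℝ) (n : ℕ) (γ : ℝ) : ℕ :=
  if _h : {k | kstar p lam c0 n ≤ k ∧
      rsum p lam k ≤ γ / 2 * rsum p lam (kstar p lam c0 n)}.Nonempty
  then sInf {k | kstar p lam c0 n ≤ k ∧
      rsum p lam k ≤ γ / 2 * rsum p lam (kstar p lam c0 n)}
  else p + 1

/-- `b` is a minimum `ℓ2`-norm interpolator for the design `M` and responses `Y`. -/
def IsMinInterp {n p : ℕ} (M : Fin n → Fin p → ℝ) (Y : Fin n → ℝ) (b : Fin p → ℝ) : Prop :=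
  (∀ i, ∑ j, M i j * b j = Y i) ∧
    ∀ b' : Fin p → ℝ, (∀ i, ∑ j, M i j * b' j = Y i) → enorm2 b ≤ enorm2 b'

open Module in
/-- Points of the unit sphere at mutual distances at least `1 / 9` number at most `19 ^ dim`. -/
lemma card_le_of_unit_separated {E : Type*} [NormedAddCommGroup E] [NormedSpace ℝ E]
    [FiniteDimensional ℝ E] (s : Finset E) (hs : ∀ x ∈ s, ‖x‖ = 1)
    (h : ∀ x ∈ s, ∀ y ∈ s, x ≠ y → 1 / 9 ≤ ‖x - y‖) : s.card ≤ 19 ^ finrank ℝ E := by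
  borelize E
  let μ : Measure E := Measure.addHaar
  let δ : ℝ := 1 / 18
  let ρ : ℝ := 19 / 18
  have δpos : 0 < δ := by norm_num [δ]
  have ρpos : 0 < ρ := by norm_num [ρ]
  have D : Set.Pairwise (s : Set E) (Function.onFun Disjoint fun c => Metric.ball (c : E) δ) := by
    rintro c hc d hd hcd
    apply Metric.ball_disjoint_ball
    rw [dist_eq_norm]
    refine le_trans (le_of_eq ?_) (h c hc d hd hcd)
    norm_num [δ]
  have A_subset : (⋃ c ∈ s, Metric.ball (c : E) δ) ⊆ Metric.ball (0 : E) ρ := by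
    refine Set.iUnion₂_subset fun x hx => Metric.ball_subset_ball' ?_
    rw [dist_zero_right, hs x hx]
    norm_num [δ, ρ]
  have I : (s.card : ℝ≥0∞) * ENNReal.ofReal (δ ^ finrank ℝ E) * μ (Metric.ball 0 1) ≤
      ENNReal.ofReal (ρ ^ finrank ℝ E) * μ (Metric.ball 0 1) :=
    calc
      _ = μ (⋃ c ∈ s, Metric.ball (c : E) δ) := by
        rw [measure_biUnion_finset D fun c _ => measurableSet_ball]
        simp only [μ.addHaar_ball_of_pos _ δpos, Finset.sum_const, nsmul_eq_mul, mul_assoc]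
      _ ≤ μ (Metric.ball (0 : E) ρ) := measure_mono A_subset
      _ = _ := by simp only [μ.addHaar_ball_of_pos _ ρpos]
  have J : (s.card : ℝ≥0∞) * ENNReal.ofReal (δ ^ finrank ℝ E) ≤ ENNReal.ofReal (ρ ^ finrank ℝ E) :=
    (ENNReal.mul_le_mul_iff_left (Metric.measure_ball_pos _ _ zero_lt_one).ne'
      measure_ball_lt_top.ne).1 I
  have J' := ENNReal.toReal_le_of_le_ofReal (pow_nonneg ρpos.le _) J
  rw [ENNReal.toReal_mul, ENNReal.toReal_natCast, ENNReal.toReal_ofReal (by positivity)] at J'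
  have hρ : ρ = 19 * δ := by norm_num [δ, ρ]
  rw [hρ, mul_pow] at J'
  exact_mod_cast le_of_mul_le_mul_right J' (by positivity)

open Module in
/-- The unit sphere has a `1 / 9`-net with at most `19 ^ dim` points. -/
lemma exists_unit_net (E : Type*) [NormedAddCommGroup E] [NormedSpace ℝ E]
    [FiniteDimensional ℝ E] :
    ∃ s : Finset E, (∀ x ∈ s, ‖x‖ = 1) ∧ s.card ≤ 19 ^ finrank ℝ E ∧
      ∀ u : E, ‖u‖ = 1 → ∃ x ∈ s, ‖u - x‖ ≤ 1 / 9 := by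
  let S : Set ℕ := {N | ∃ s : Finset E, (∀ x ∈ s, ‖x‖ = 1) ∧
    (∀ x ∈ s, ∀ y ∈ s, x ≠ y → 1 / 9 ≤ ‖x - y‖) ∧ s.card = N}
  have hne : S.Nonempty := ⟨0, ∅, by simp⟩
  have hbdd : BddAbove S := by
    refine ⟨19 ^ finrank ℝ E, ?_⟩
    rintro N ⟨s, h1, h2, rfl⟩
    exact card_le_of_unit_separated s h1 h2
  obtain ⟨s, h1, h2, h3⟩ := Nat.sSup_mem hne hbdd
  refine ⟨s, h1, card_le_of_unit_separated s h1 h2, fun u hu => ?_⟩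
  by_contra! hcon
  have hus : u ∉ s := fun hmem => by
    have := hcon u hmem
    norm_num at this
  have hmem : (insert u s).card ∈ S := by
    refine ⟨insert u s, ?_, ?_, rfl⟩
    · intro x hx
      rcases Finset.mem_insert.1 hx with rfl | hx
      exacts [hu, h1 x hx]
    · intro x hx y hy hxy
      rcases Finset.mem_insert.1 hx with hxu | hxs <;>
        rcases Finset.mem_insert.1 hy with hyu | hys
      · exact absurd (hxu.trans hyu.symm) hxy
      · rw [hxu]
        exact (hcon y hys).le
      · rw [hyu, norm_sub_rev]
        exact (hcon x hxs).le
      · exact h2 x hxs y hys hxy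
  have := le_csSup hbdd hmem
  rw [Finset.card_insert_of_notMem hus] at this
  omega

/-- The moment generating function of the square of a standard Gaussian. -/
lemma integral_exp_mul_sq_gaussianReal {a : ℝ} (ha : a < 1 / 2) :
    ∫ x, Real.exp (a * x ^ 2) ∂(gaussianReal 0 1) = (√(1 - 2 * a))⁻¹ := by
  rw [integral_gaussianReal_eq_integral_smul one_ne_zero]
  have : ∀ x : ℝ, gaussianPDFReal 0 1 x • Real.exp (a * x ^ 2) =
      (√(2 * Real.pi))⁻¹ * Real.exp (-(1 / 2 - a) * x ^ 2) := by
    intro x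
    simp only [gaussianPDFReal, smul_eq_mul, NNReal.coe_one, mul_one, sub_zero]
    rw [mul_assoc, ← Real.exp_add]
    congr 2
    ring
  simp_rw [this]
  rw [integral_const_mul, integral_gaussian, ← Real.sqrt_inv, ← Real.sqrt_inv, ← Real.sqrt_mul]
  · congr 1
    have h1 : (1 : ℝ) / 2 - a ≠ 0 := by linarith
    have h2 : 1 - 2 * a ≠ 0 := by linarith
    have h3 := Real.pi_pos.ne'
    field_simp
  · positivity

lemma integrable_exp_mul_sq_gaussianReal {a : ℝ} (ha : a < 1 / 2) :
    Integrable (fun x => Real.exp (a * x ^ 2)) (gaussianReal 0 1) := by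
  by_contra h
  have h1 := integral_undef h
  rw [integral_exp_mul_sq_gaussianReal ha] at h1
  have : 0 < √(1 - 2 * a) := Real.sqrt_pos.2 (by linarith)
  exact (inv_pos.2 this).ne' h1

lemma integral_exp_mul_sq_gaussianReal_le {x : ℝ} (h0 : 0 ≤ x) (h1 : x ≤ 1 / 4) :
    ∫ y, Real.exp (x * y ^ 2) ∂(gaussianReal 0 1) ≤ Real.exp (2 * x) := by
  rw [integral_exp_mul_sq_gaussianReal (by linarith)]
  refine inv_le_of_inv_le₀ (Real.exp_pos _) ?_
  rw [← Real.exp_neg]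
  refine Real.le_sqrt_of_sq_le ?_
  rw [← Real.exp_nat_mul]
  have h2 := Real.add_one_le_exp (4 * x)
  have h3 : Real.exp (↑(2 : ℕ) * -(2 * x)) = (Real.exp (4 * x))⁻¹ := by
    rw [← Real.exp_neg]
    congr 1
    push_cast
    ring
  rw [h3]
  refine (inv_anti₀ (by linarith) h2).trans ?_
  rw [inv_le_iff_one_le_mul₀ (by linarith)]
  nlinarith

lemma integral_exp_neg_mul_sq_gaussianReal_le {x : ℝ} (h0 : 0 ≤ x) (h1 : x ≤ 1 / 2) :
    ∫ y, Real.exp (-x * y ^ 2) ∂(gaussianReal 0 1) ≤ Real.exp (-x / 2) := by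
  rw [integral_exp_mul_sq_gaussianReal (by linarith)]
  refine inv_le_of_inv_le₀ (Real.exp_pos _) ?_
  rw [← Real.exp_neg]
  refine Real.le_sqrt_of_sq_le ?_
  rw [← Real.exp_nat_mul]
  have h2 := Real.add_one_le_exp (-x)
  have h3 : Real.exp (↑(2 : ℕ) * -(-x / 2)) = (Real.exp (-x))⁻¹ := by
    rw [← Real.exp_neg]
    congr 1
    push_cast
    ring
  rw [h3]
  refine (inv_anti₀ (by linarith) h2).trans ?_
  rw [inv_le_iff_one_le_mul₀ (by linarith)]
  nlinarith

/-- Chernoff upper bound for a weighted sum of squares of independent standard Gaussians. -/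
lemma measure_weighted_sq_ge_le {J : Type*} [Fintype J] {w : J → ℝ} {S T : ℝ} (hT : 0 < T)
    (hS : 0 < S) (hw : ∀ j, 0 ≤ w j) (hwT : ∀ j, w j * T ≤ S) (hsum : ∑ j, w j ≤ S) :
    (Measure.pi fun _ : J => gaussianReal 0 1) {y | 4 * S < ∑ j, w j * y j ^ 2} ≤
      ENNReal.ofReal (Real.exp (-T / 2)) := by
  set μ := Measure.pi fun _ : J => gaussianReal 0 1
  set s := T / (4 * S) with hs
  have hspos : 0 < s := by positivity
  have hsS : s * S = T / 4 := by rw [hs]; field_simp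
  have hsw : ∀ j, s * w j ≤ 1 / 4 := by
    intro j
    rw [hs, div_mul_eq_mul_div, div_le_iff₀ (by positivity)]
    linarith [hwT j]
  have hexp : ∀ y : J → ℝ, Real.exp (s * ∑ j, w j * y j ^ 2) =
      ∏ j, Real.exp ((s * w j) * y j ^ 2) := by
    intro y
    rw [← Real.exp_sum, Finset.mul_sum]
    simp only [mul_assoc]
  have hexp_int : Integrable (fun y : J → ℝ => Real.exp (s * ∑ j, w j * y j ^ 2)) μ := by
    simp_rw [hexp]
    exact Integrable.fintype_prod (f := fun j (x : ℝ) => Real.exp ((s * w j) * x ^ 2))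
      fun j => integrable_exp_mul_sq_gaussianReal (by linarith [hsw j])
  have hmgf : mgf (fun y : J → ℝ => ∑ j, w j * y j ^ 2) μ s ≤ Real.exp (T / 2) := by
    unfold mgf
    simp_rw [hexp]
    rw [integral_fintype_prod_eq_prod (f := fun j (x : ℝ) => Real.exp ((s * w j) * x ^ 2))]
    calc _ ≤ ∏ j, Real.exp (2 * (s * w j)) :=
          Finset.prod_le_prod (fun j _ => integral_nonneg fun _ => (Real.exp_pos _).le)
            fun j _ => integral_exp_mul_sq_gaussianReal_le (by have := hw j; positivity) (hsw j)
      _ ≤ _ := by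
        rw [← Real.exp_sum, ← Finset.mul_sum, ← Finset.mul_sum]
        refine Real.exp_le_exp.2 ?_
        nlinarith
  have h := measure_ge_le_exp_mul_mgf (4 * S) hspos.le hexp_int
  have hb : μ.real {y | 4 * S < ∑ j, w j * y j ^ 2} ≤ Real.exp (-T / 2) := by
    calc _ ≤ μ.real {y | 4 * S ≤ ∑ j, w j * y j ^ 2} :=
          measureReal_mono fun y hy => le_of_lt (by simpa using hy)
      _ ≤ _ := h
      _ ≤ Real.exp (-s * (4 * S)) * Real.exp (T / 2) := by gcongr
      _ = _ := by
        rw [← Real.exp_add]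
        exact congrArg Real.exp (by linarith)
  rw [← ofReal_measureReal]
  exact ENNReal.ofReal_le_ofReal hb

/-- Chernoff lower bound for a weighted sum of squares of independent standard Gaussians. -/
lemma measure_weighted_sq_le_le {J : Type*} [Fintype J] {w : J → ℝ} {S T : ℝ} (hT : 0 < T)
    (hS : 0 < S) (hw : ∀ j, 0 ≤ w j) (hwT : ∀ j, w j * T ≤ S) (hsum : ∑ j, w j = S) :
    (Measure.pi fun _ : J => gaussianReal 0 1) {y | ∑ j, w j * y j ^ 2 < S / 4} ≤
      ENNReal.ofReal (Real.exp (-T / 8)) := by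
  set μ := Measure.pi fun _ : J => gaussianReal 0 1
  set s := T / (2 * S) with hs
  have hspos : 0 < s := by positivity
  have hsS : s * S = T / 2 := by rw [hs]; field_simp
  have hsw : ∀ j, s * w j ≤ 1 / 2 := by
    intro j
    rw [hs, div_mul_eq_mul_div, div_le_iff₀ (by positivity)]
    linarith [hwT j]
  have hsw0 : ∀ j, 0 ≤ s * w j := fun j => mul_nonneg hspos.le (hw j)
  have hexp : ∀ y : J → ℝ, Real.exp (-s * ∑ j, w j * y j ^ 2) =
      ∏ j, Real.exp (-(s * w j) * y j ^ 2) := by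
    intro y
    rw [← Real.exp_sum, Finset.mul_sum]
    simp only [mul_assoc, neg_mul]
  have hexp_int : Integrable (fun y : J → ℝ => Real.exp (-s * ∑ j, w j * y j ^ 2)) μ := by
    simp_rw [hexp]
    exact Integrable.fintype_prod (f := fun j (x : ℝ) => Real.exp (-(s * w j) * x ^ 2))
      fun j => integrable_exp_mul_sq_gaussianReal (by linarith [hsw0 j])
  have hmgf : mgf (fun y : J → ℝ => ∑ j, w j * y j ^ 2) μ (-s) ≤ Real.exp (-T / 4) := by
    unfold mgf
    simp_rw [hexp]
    rw [integral_fintype_prod_eq_prod (f := fun j (x : ℝ) => Real.exp (-(s * w j) * x ^ 2))]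
    calc _ ≤ ∏ j, Real.exp (-(s * w j) / 2) :=
          Finset.prod_le_prod (fun j _ => integral_nonneg fun _ => (Real.exp_pos _).le)
            fun j _ => integral_exp_neg_mul_sq_gaussianReal_le (hsw0 j) (hsw j)
      _ ≤ _ := by
        rw [← Real.exp_sum, ← Finset.sum_div, Finset.sum_neg_distrib, ← Finset.mul_sum, hsum, hsS]
        refine Real.exp_le_exp.2 (le_of_eq ?_)
        ring
  have h := measure_le_le_exp_mul_mgf (S / 4) (neg_nonpos.2 hspos.le) hexp_int
  have hb : μ.real {y | ∑ j, w j * y j ^ 2 < S / 4} ≤ Real.exp (-T / 8) := by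
    calc _ ≤ μ.real {y | ∑ j, w j * y j ^ 2 ≤ S / 4} :=
          measureReal_mono fun y hy => le_of_lt (by simpa using hy)
      _ ≤ _ := h
      _ ≤ Real.exp (- -s * (S / 4)) * Real.exp (-T / 4) := by gcongr
      _ = _ := by
        rw [← Real.exp_add]
        exact congrArg Real.exp (by linarith)
  rw [← ofReal_measureReal]
  exact ENNReal.ofReal_le_ofReal hb

lemma charFunDual_gaussianReal_standard (L : StrongDual ℝ ℝ) :
    charFunDual (gaussianReal 0 1) L = Complex.exp (-((L 1 ^ 2 : ℝ) : ℂ) / 2) := by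
  have h1 : charFunDual (gaussianReal 0 1) L = charFun (gaussianReal 0 1) (L 1) := by
    rw [charFunDual_apply, charFun_apply_real]
    refine integral_congr_ae (Filter.Eventually.of_forall fun v => ?_)
    have : L v = L 1 * v := by
      have := L.map_smul v 1
      simp only [smul_eq_mul, mul_one] at this
      rw [this, mul_comm]
    simp [this]
  rw [h1, charFun_gaussianReal]
  congr 1
  push_cast
  simp [neg_div]

/-- Orthonormal linear functionals of a standard Gaussian array are independent standard
Gaussians. -/
lemma map_gaussian_array {I J K : Type*} [Fintype I] [Fintype J] [Fintype K]
    (M : K → I → J → ℝ)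
    (hM : ∀ k l, ∑ i, ∑ j, M k i j * M l i j = if k = l then 1 else 0) :
    Measure.map (fun (g : I → J → ℝ) k => ∑ i, ∑ j, M k i j * g i j)
      (Measure.pi fun _ : I => Measure.pi fun _ : J => gaussianReal 0 1) =
      Measure.pi fun _ : K => gaussianReal 0 1 := by
  let A : (I → J → ℝ) →L[ℝ] (K → ℝ) := LinearMap.toContinuousLinearMap
    { toFun := fun g k => ∑ i, ∑ j, M k i j * g i j
      map_add' := fun x y => by
        ext k
        simp [mul_add, Finset.sum_add_distrib]
      map_smul' := fun c x => by
        ext k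
        simp [Finset.mul_sum, mul_left_comm] }
  have hA : (fun (g : I → J → ℝ) k => ∑ i, ∑ j, M k i j * g i j) = A := rfl
  rw [hA]
  have : IsProbabilityMeasure (Measure.map A
      (Measure.pi fun _ : I => Measure.pi fun _ : J => gaussianReal 0 1)) :=
    Measure.isProbabilityMeasure_map A.continuous.measurable.aemeasurable
  refine Measure.ext_of_charFunDual (funext fun L => ?_)
  rw [charFunDual_map, charFunDual_pi, charFunDual_pi]
  simp_rw [charFunDual_pi, charFunDual_gaussianReal_standard, ← Complex.exp_sum, neg_div,
    Finset.sum_neg_distrib, ← Finset.sum_div, ← Complex.ofReal_sum]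
  congr 4
  simp only [ContinuousLinearMap.comp_apply, ContinuousLinearMap.single_apply]
  set a : K → ℝ := fun k => L (Pi.single k 1) with ha
  have hL : ∀ y : K → ℝ, L y = ∑ k, y k * a k := by
    intro y
    conv_lhs => rw [← Finset.univ_sum_single y, map_sum]
    refine Finset.sum_congr rfl fun k _ => ?_
    rw [ha, ← smul_eq_mul, ← L.map_smul]
    congr 1
    ext l
    by_cases h : l = k
    · subst h; simp
    · simp [h]
  have hAs : ∀ i j, L (A (Pi.single i (Pi.single j 1))) = ∑ k, M k i j * a k := by
    intro i j
    rw [hL]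
    refine Finset.sum_congr rfl fun k _ => ?_
    congr 1
    change ∑ i', ∑ j', M k i' j' * (Pi.single i (Pi.single j (1 : ℝ)) : I → J → ℝ) i' j' = _
    rw [Finset.sum_eq_single i, Finset.sum_eq_single j] <;> simp +contextual [Pi.single_apply]
  calc ∑ i, ∑ j, L (A (Pi.single i (Pi.single j 1))) ^ 2
      = ∑ i, ∑ j, ∑ k, ∑ l, a k * a l * (M k i j * M l i j) := by
        refine Finset.sum_congr rfl fun i _ => Finset.sum_congr rfl fun j _ => ?_
        rw [hAs, sq, Finset.sum_mul_sum]
        refine Finset.sum_congr rfl fun k _ => Finset.sum_congr rfl fun l _ => ?_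
        ring
    _ = ∑ k, ∑ l, a k * a l * ∑ i, ∑ j, M k i j * M l i j := by
        simp_rw [Finset.mul_sum]
        calc _ = ∑ i, ∑ k, ∑ j, ∑ l, a k * a l * (M k i j * M l i j) :=
              Finset.sum_congr rfl fun i _ => Finset.sum_comm
          _ = ∑ k, ∑ i, ∑ j, ∑ l, a k * a l * (M k i j * M l i j) := Finset.sum_comm
          _ = ∑ k, ∑ i, ∑ l, ∑ j, a k * a l * (M k i j * M l i j) :=
              Finset.sum_congr rfl fun k _ => Finset.sum_congr rfl fun i _ => Finset.sum_comm
          _ = _ := Finset.sum_congr rfl fun k _ => Finset.sum_comm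
    _ = ∑ k, a k ^ 2 := by
        simp_rw [hM]
        refine Finset.sum_congr rfl fun k _ => ?_
        simp [sq]

/-- A bound for a linear map on a `1 / 9`-net controls its operator norm. -/
lemma opNorm_le_of_net {E F : Type*} [NormedAddCommGroup E] [NormedSpace ℝ E]
    [NormedAddCommGroup F] [NormedSpace ℝ F] (A : E →L[ℝ] F) (s : Finset E)
    (hs : ∀ u : E, ‖u‖ = 1 → ∃ x ∈ s, ‖u - x‖ ≤ 1 / 9) {K : ℝ} (hK : 0 ≤ K)
    (hA : ∀ x ∈ s, ‖A x‖ ≤ K) : ‖A‖ ≤ 9 / 8 * K := by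
  have h : ‖A‖ ≤ K + ‖A‖ * (1 / 9) := by
    refine A.opNorm_le_of_unit_norm (by positivity) fun u hu => ?_
    obtain ⟨x, hx, hux⟩ := hs u hu
    calc ‖A u‖ = ‖A x + A (u - x)‖ := by rw [← map_add]; congr 2; abel
      _ ≤ ‖A x‖ + ‖A (u - x)‖ := norm_add_le _ _
      _ ≤ K + ‖A‖ * (1 / 9) :=
        add_le_add (hA x hx) ((A.le_opNorm _).trans (by gcongr))
  linarith

/-- The linear map `u ↦ (√(w j) * ∑ i, Z j i * u i)_j` between Euclidean spaces. -/
def weightedMap {I J : Type*} [Fintype I] [Fintype J] (w : J → ℝ) (Z : J → I → ℝ) :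
    EuclideanSpace ℝ I →L[ℝ] EuclideanSpace ℝ J :=
  LinearMap.toContinuousLinearMap
    { toFun := fun u => WithLp.toLp 2 fun j => √(w j) * ∑ i, Z j i * u i
      map_add' := fun x y => by
        ext k
        simp [mul_add, Finset.sum_add_distrib]
      map_smul' := fun c x => by
        ext k
        simp [Finset.mul_sum, mul_left_comm] }

lemma weightedMap_norm_sq {I J : Type*} [Fintype I] [Fintype J] {w : J → ℝ} (hw : ∀ j, 0 ≤ w j)
    (Z : J → I → ℝ) (u : EuclideanSpace ℝ I) :
    ‖weightedMap w Z u‖ ^ 2 = ∑ j, w j * (∑ i, Z j i * u i) ^ 2 := by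
  rw [EuclideanSpace.real_norm_sq_eq]
  refine Finset.sum_congr rfl fun j _ => ?_
  change (√(w j) * ∑ i, Z j i * u i) ^ 2 = _
  rw [mul_pow, Real.sq_sqrt (hw j)]

lemma nineteen_pow_mul_exp_le {d : ℕ} {T a : ℝ} (hd : 48 * (d : ℝ) ≤ T) (ha : a ≤ -T / 8) :
    (19 : ℝ) ^ d * Real.exp a ≤ Real.exp (-T / 16) := by
  have h19 : (19 : ℝ) ≤ Real.exp 3 := by
    have h1 := Real.exp_one_gt_d9
    have h2 : Real.exp 3 = Real.exp 1 ^ 3 := by rw [← Real.exp_nat_mul]; norm_num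
    rw [h2]
    calc (19 : ℝ) ≤ 2.7182818283 ^ 3 := by norm_num
      _ ≤ _ := by gcongr
  calc (19 : ℝ) ^ d * Real.exp a ≤ Real.exp 3 ^ d * Real.exp a := by gcongr
    _ = Real.exp (d * 3 + a) := by rw [← Real.exp_nat_mul, ← Real.exp_add]
    _ ≤ _ := Real.exp_le_exp.2 (by linarith)

lemma measure_biUnion_net_le {Ω' E : Type*} [MeasurableSpace Ω'] (μ : Measure Ω') (s : Finset E)
    (B : E → Set Ω') {d : ℕ} (hs : s.card ≤ 19 ^ d) {T a : ℝ} (hd : 48 * (d : ℝ) ≤ T)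
    (ha : a ≤ -T / 8) (hB : ∀ x ∈ s, μ (B x) ≤ ENNReal.ofReal (Real.exp a)) :
    μ (⋃ x ∈ s, B x) ≤ ENNReal.ofReal (Real.exp (-T / 16)) := by
  calc μ (⋃ x ∈ s, B x) ≤ ∑ x ∈ s, μ (B x) := measure_biUnion_finset_le _ _
    _ ≤ ∑ _x ∈ s, ENNReal.ofReal (Real.exp a) := Finset.sum_le_sum hB
    _ = ENNReal.ofReal (s.card * Real.exp a) := by
      rw [Finset.sum_const, nsmul_eq_mul, ENNReal.ofReal_mul (by positivity),
        ENNReal.ofReal_natCast]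
    _ ≤ _ := by
      refine ENNReal.ofReal_le_ofReal (le_trans ?_ (nineteen_pow_mul_exp_le hd ha))
      gcongr
      exact_mod_cast hs

section GaussianQuadraticForms

variable {Ω' I J : Type*} [MeasurableSpace Ω'] [Fintype I] [Fintype J]

/-- The random matrix `Z` has Gaussian images: `Z u` is standard Gaussian for every unit `u`. -/
def HasGaussianImages (μ : Measure Ω') (Z : Ω' → J → I → ℝ) : Prop :=
  ∀ u : I → ℝ, ∑ i, u i ^ 2 = 1 →
    AEMeasurable (fun ω j => ∑ i, Z ω j i * u i) μ ∧
      Measure.map (fun ω j => ∑ i, Z ω j i * u i) μ = Measure.pi fun _ : J => gaussianReal 0 1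

lemma HasGaussianImages.measure_preimage {μ : Measure Ω'} {Z : Ω' → J → I → ℝ}
    (hZ : HasGaussianImages μ Z) {u : EuclideanSpace ℝ I} (hu : ‖u‖ = 1) {B : Set (J → ℝ)}
    (hB : MeasurableSet B) :
    μ {ω | (fun j => ∑ i, Z ω j i * u i) ∈ B} =
      (Measure.pi fun _ : J => gaussianReal 0 1) B := by
  obtain ⟨h1, h2⟩ := hZ u (by rw [← EuclideanSpace.real_norm_sq_eq, hu, one_pow])
  rw [← h2, Measure.map_apply_of_aemeasurable h1 hB]
  rfl

/-- Uniform upper bound for weighted Gaussian quadratic forms. -/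
lemma measure_exists_quadratic_gt_le {μ : Measure Ω'} {Z : Ω' → J → I → ℝ}
    (hZ : HasGaussianImages μ Z) {w : J → ℝ} {S T : ℝ} (hT : 0 < T)
    (hw : ∀ j, 0 ≤ w j) (hwT : ∀ j, w j * T ≤ S) (hsum : ∑ j, w j ≤ S)
    (hd : 48 * (Fintype.card I : ℝ) ≤ T) :
    μ {ω | ∃ u : I → ℝ, 81 / 16 * S * ∑ i, u i ^ 2 < ∑ j, w j * (∑ i, Z ω j i * u i) ^ 2} ≤
      ENNReal.ofReal (Real.exp (-T / 16)) := by
  have hS0 : 0 ≤ S := (Finset.sum_nonneg fun j _ => hw j).trans hsum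
  rcases hS0.eq_or_lt with hS | hS
  · have hw0 : ∀ j, w j = 0 := fun j => by
      have := hwT j
      have := hw j
      nlinarith
    simp [hw0, ← hS]
  obtain ⟨s, hs1, hs2, hs3⟩ := exists_unit_net (EuclideanSpace ℝ I)
  rw [finrank_euclideanSpace] at hs2
  refine (measure_mono ?_).trans (measure_biUnion_net_le μ s
    (fun x => {ω | (fun j => ∑ i, Z ω j i * x i) ∈ {y : J → ℝ | 4 * S < ∑ j, w j * y j ^ 2}})
    hs2 hd (a := -T / 2) (by linarith) fun x hx => ?_)
  · rintro ω ⟨u, hu⟩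
    by_contra hcon
    simp only [Set.mem_iUnion, Set.mem_ofPred_eq, not_exists, not_lt] at hcon
    have hA := opNorm_le_of_net (weightedMap w (Z ω)) s hs3 (K := 2 * √S) (by positivity)
      fun x hx => by
        refine abs_le_of_sq_le_sq' ?_ (by positivity) |>.2
        rw [weightedMap_norm_sq hw, mul_pow, Real.sq_sqrt hS.le]
        linarith [hcon x hx]
    have h := (weightedMap w (Z ω)).le_of_opNorm_le hA (WithLp.toLp 2 u)
    have h2 := pow_le_pow_left₀ (norm_nonneg _) h 2
    rw [weightedMap_norm_sq hw, mul_pow, mul_pow, mul_pow, Real.sq_sqrt hS.le,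
      EuclideanSpace.real_norm_sq_eq] at h2
    simp only at h2
    linarith
  · rw [hZ.measure_preimage (hs1 x hx)]
    · exact measure_weighted_sq_ge_le hT hS hw hwT hsum
    · exact measurableSet_lt (by fun_prop) (by fun_prop)

/-- Uniform lower bound for weighted Gaussian quadratic forms. -/
lemma measure_exists_quadratic_lt_le {μ : Measure Ω'} {Z : Ω' → J → I → ℝ}
    (hZ : HasGaussianImages μ Z) {w : J → ℝ} {S T : ℝ} (hT : 0 < T) (hS : 0 < S)
    (hw : ∀ j, 0 ≤ w j) (hwT : ∀ j, w j * T ≤ S) (hsum : ∑ j, w j = S)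
    (hd : 48 * (Fintype.card I : ℝ) ≤ T) :
    μ {ω | ∃ u : I → ℝ, ∑ j, w j * (∑ i, Z ω j i * u i) ^ 2 < S / 16 * ∑ i, u i ^ 2} ≤
      ENNReal.ofReal (2 * Real.exp (-T / 16)) := by
  obtain ⟨s, hs1, hs2, hs3⟩ := exists_unit_net (EuclideanSpace ℝ I)
  rw [finrank_euclideanSpace] at hs2
  have hlow := measure_biUnion_net_le μ s
    (fun x => {ω | (fun j => ∑ i, Z ω j i * x i) ∈ {y : J → ℝ | ∑ j, w j * y j ^ 2 < S / 4}})
    hs2 hd (a := -T / 8) le_rfl fun x hx => by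
      rw [hZ.measure_preimage (hs1 x hx)]
      · exact measure_weighted_sq_le_le hT hS hw hwT hsum
      · exact measurableSet_lt (by fun_prop) (by fun_prop)
  have hup := measure_exists_quadratic_gt_le hZ hT hw hwT hsum.le hd
  rw [two_mul, ENNReal.ofReal_add (Real.exp_pos _).le (Real.exp_pos _).le]
  refine (measure_mono ?_).trans ((measure_union_le _ _).trans (add_le_add hlow hup))
  rintro ω ⟨u, hu⟩
  by_contra hcon
  simp only [Set.mem_union, Set.mem_iUnion, Set.mem_ofPred_eq, not_or, not_exists, not_lt] at hcon
  obtain ⟨hlo, hhi⟩ := hcon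
  set A := weightedMap w (Z ω) with hAdef
  have hA : ‖A‖ ≤ 9 / 4 * √S := by
    refine A.opNorm_le_bound (by positivity) fun v => ?_
    refine abs_le_of_sq_le_sq' ?_ (by positivity) |>.2
    rw [weightedMap_norm_sq hw, mul_pow, mul_pow, Real.sq_sqrt hS.le,
      EuclideanSpace.real_norm_sq_eq]
    linarith [hhi v]
  have hunit : ∀ v : EuclideanSpace ℝ I, ‖v‖ = 1 → √S / 4 ≤ ‖A v‖ := by
    intro v hv
    obtain ⟨x, hx, hvx⟩ := hs3 v hv
    have h1 : √S / 2 ≤ ‖A x‖ := by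
      refine abs_le_of_sq_le_sq' ?_ (norm_nonneg _) |>.2
      rw [weightedMap_norm_sq hw, div_pow, Real.sq_sqrt hS.le]
      linarith [hlo x hx]
    have h2 : ‖A (v - x)‖ ≤ 9 / 4 * √S * (1 / 9) :=
      (A.le_of_opNorm_le hA _).trans (by gcongr)
    have h3 : ‖A x‖ ≤ ‖A v‖ + ‖A (v - x)‖ := by
      have : A x = A v - A (v - x) := by rw [← map_sub]; congr 1; abel
      rw [this]
      exact norm_sub_le _ _
    linarith
  set v : EuclideanSpace ℝ I := WithLp.toLp 2 u
  have hv : √S / 4 * ‖v‖ ≤ ‖A v‖ := by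
    rcases eq_or_ne v 0 with h0 | h0
    · simp [h0]
    · have hpos : 0 < ‖v‖ := norm_pos_iff.2 h0
      have := hunit (‖v‖⁻¹ • v) (by rw [norm_smul, norm_inv, norm_norm, inv_mul_cancel₀ hpos.ne'])
      rw [map_smul, norm_smul, norm_inv, norm_norm, inv_mul_eq_div, le_div_iff₀ hpos] at this
      exact this
  have h2 := pow_le_pow_left₀ (by positivity) hv 2
  rw [weightedMap_norm_sq hw, mul_pow, div_pow, Real.sq_sqrt hS.le,
    EuclideanSpace.real_norm_sq_eq] at h2
  simp only [v] at h2
  linarith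

end GaussianQuadraticForms

lemma orthogonal_dotProduct {p : ℕ} {Q : Matrix (Fin p) (Fin p) ℝ} (hQ : Q * Qᵀ = 1)
    (a b : Fin p → ℝ) : ∑ j, (Qᵀ *ᵥ a) j * (Qᵀ *ᵥ b) j = ∑ j, a j * b j := by
  change (Qᵀ *ᵥ a) ⬝ᵥ (Qᵀ *ᵥ b) = a ⬝ᵥ b
  rw [dotProduct_mulVec, vecMul_transpose, mulVec_mulVec, hQ, one_mulVec]

/-- If `∑ i, u i • x i` is bounded below, every right-hand side has a solution of small norm. -/
lemma exists_small_solution {n p : ℕ} (x : Fin n → Fin p → ℝ) {R : ℝ} (hR : 0 < R)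
    (hlow : ∀ u : Fin n → ℝ, R / 16 * ∑ i, u i ^ 2 ≤ ∑ l, (∑ i, x i l * u i) ^ 2)
    (ξ : Fin n → ℝ) :
    ∃ η : Fin p → ℝ, (∀ i, ∑ l, x i l * η l = ξ i) ∧ R * ∑ l, η l ^ 2 ≤ 16 * ∑ i, ξ i ^ 2 := by
  let G : (Fin n → ℝ) →ₗ[ℝ] (Fin n → ℝ) :=
    { toFun := fun u i => ∑ l, x i l * ∑ k, x k l * u k
      map_add' := fun a b => by
        ext i
        simp [mul_add, Finset.sum_add_distrib]
      map_smul' := fun c a => by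
        ext i
        simp [Finset.mul_sum, mul_left_comm] }
  have hquad : ∀ u : Fin n → ℝ, ∑ l, (∑ i, x i l * u i) ^ 2 = ∑ i, u i * G u i := by
    intro u
    change _ = ∑ i, u i * ∑ l, x i l * ∑ k, x k l * u k
    have e : ∀ i, u i * ∑ l, x i l * ∑ k, x k l * u k =
        ∑ l, u i * (x i l * ∑ k, x k l * u k) := fun i => Finset.mul_sum _ _ _
    rw [Finset.sum_congr rfl fun i _ => e i, Finset.sum_comm]
    refine Finset.sum_congr rfl fun l _ => ?_
    rw [sq, Finset.sum_mul]
    refine Finset.sum_congr rfl fun i _ => ?_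
    ring
  have hinj : Function.Injective G := by
    rw [← LinearMap.ker_eq_bot, LinearMap.ker_eq_bot']
    intro u hu
    have h1 := hlow u
    rw [hquad, hu] at h1
    simp only [Pi.zero_apply, mul_zero, Finset.sum_const_zero] at h1
    have h2 : ∑ i, u i ^ 2 ≤ 0 := by
      by_contra h
      have : 0 < R / 16 * ∑ i, u i ^ 2 := mul_pos (by positivity) (not_le.1 h)
      linarith
    have h3 := (Finset.sum_eq_zero_iff_of_nonneg fun i _ => sq_nonneg (u i)).1
      (le_antisymm h2 (Finset.sum_nonneg fun i _ => sq_nonneg (u i)))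
    ext i
    simpa using h3 i (Finset.mem_univ i)
  obtain ⟨u, hu⟩ := (LinearMap.injective_iff_surjective.1 hinj) ξ
  refine ⟨fun l => ∑ k, x k l * u k, fun i => congrFun hu i, ?_⟩
  have h1 := hlow u
  have h2 := hquad u
  rw [hu] at h2
  have h3 := Finset.sum_mul_sq_le_sq_mul_sq Finset.univ u ξ
  rw [← h2] at h3
  set N := ∑ l, (∑ i, x i l * u i) ^ 2
  set U := ∑ i, u i ^ 2
  set Ξ := ∑ i, ξ i ^ 2
  have hN : 0 ≤ N := Finset.sum_nonneg fun i _ => sq_nonneg _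
  have hΞ : 0 ≤ Ξ := Finset.sum_nonneg fun i _ => sq_nonneg _
  rcases hN.eq_or_lt with h | h
  · rw [← h]
    simpa using hΞ
  · refine le_of_mul_le_mul_right ?_ h
    nlinarith [mul_le_mul_of_nonneg_right h1 hΞ]

/-- Prediction error bound from a lower isometry on the coordinates in `H` and an upper bound on
the remaining coordinates. -/
lemma weighted_sq_le_of_head_tail {n p : ℕ} (z : Fin n → Fin p → ℝ) (l : Fin p → ℝ)
    (H : Finset (Fin p)) {b t : ℝ} (hb : 0 ≤ b) (ht0 : 0 ≤ t)
    (hhead : ∀ h : Fin p → ℝ,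
      n / 16 * ∑ j ∈ H, l j * h j ^ 2 ≤ ∑ i, (∑ j ∈ H, z i j * h j) ^ 2)
    (htail : ∀ u : Fin n → ℝ, ∑ j ∈ Hᶜ, (∑ i, z i j * u i) ^ 2 ≤ b * ∑ i, u i ^ 2)
    (ht : ∀ j ∈ Hᶜ, n * l j ≤ t) (h : Fin p → ℝ) (ξ : Fin n → ℝ)
    (hξ : ∀ i, ∑ j, z i j * h j = ξ i) :
    n * ∑ j, l j * h j ^ 2 ≤ 32 * ∑ i, ξ i ^ 2 + (32 * b + t) * ∑ j, h j ^ 2 := by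
  set y : Fin n → ℝ := fun i => ∑ j ∈ Hᶜ, z i j * h j with hy
  have hHc : ∑ j ∈ Hᶜ, h j ^ 2 ≤ ∑ j, h j ^ 2 :=
    Finset.sum_le_sum_of_subset_of_nonneg (Finset.subset_univ _) fun j _ _ => sq_nonneg _
  have hY : ∑ i, y i ^ 2 ≤ b * ∑ j, h j ^ 2 := by
    have h1 : ∑ i, y i ^ 2 = ∑ j ∈ Hᶜ, h j * ∑ i, z i j * y i := by
      simp_rw [Finset.mul_sum]
      rw [Finset.sum_comm]
      refine Finset.sum_congr rfl fun i _ => ?_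
      rw [sq]
      nth_rewrite 1 [hy]
      rw [Finset.sum_mul]
      refine Finset.sum_congr rfl fun j _ => ?_
      ring
    have h2 := Finset.sum_mul_sq_le_sq_mul_sq Hᶜ h fun j => ∑ i, z i j * y i
    rw [← h1] at h2
    have h3 := htail y
    have hY0 : 0 ≤ ∑ i, y i ^ 2 := Finset.sum_nonneg fun i _ => sq_nonneg _
    have hc0 : 0 ≤ ∑ j ∈ Hᶜ, h j ^ 2 := Finset.sum_nonneg fun i _ => sq_nonneg _
    rcases hY0.eq_or_lt with h0 | h0
    · rw [← h0]
      exact mul_nonneg hb (hc0.trans hHc)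
    · refine le_of_mul_le_mul_right ?_ h0
      calc _ = (∑ i, y i ^ 2) ^ 2 := (sq _).symm
        _ ≤ _ := h2
        _ ≤ (∑ j ∈ Hᶜ, h j ^ 2) * (b * ∑ i, y i ^ 2) := by gcongr
        _ ≤ (∑ j, h j ^ 2) * (b * ∑ i, y i ^ 2) := by gcongr
        _ = _ := by ring
  have hhd : ∑ i, (∑ j ∈ H, z i j * h j) ^ 2 ≤ 2 * ∑ i, ξ i ^ 2 + 2 * ∑ i, y i ^ 2 := by
    rw [Finset.mul_sum, Finset.mul_sum, ← Finset.sum_add_distrib]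
    refine Finset.sum_le_sum fun i _ => ?_
    have h1 : ∑ j ∈ H, z i j * h j = ξ i - y i := by
      rw [← hξ i, ← Finset.sum_add_sum_compl H]
      simp [hy]
    rw [h1]
    nlinarith [sq_nonneg (ξ i + y i)]
  have htl : n * ∑ j ∈ Hᶜ, l j * h j ^ 2 ≤ t * ∑ j, h j ^ 2 := by
    calc _ = ∑ j ∈ Hᶜ, (n * l j) * h j ^ 2 := by
          rw [Finset.mul_sum]
          exact Finset.sum_congr rfl fun j _ => by ring
      _ ≤ ∑ j ∈ Hᶜ, t * h j ^ 2 :=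
          Finset.sum_le_sum fun j hj => mul_le_mul_of_nonneg_right (ht j hj) (sq_nonneg _)
      _ ≤ _ := by
          rw [← Finset.mul_sum]
          gcongr
  rw [← Finset.sum_add_sum_compl H fun j => l j * h j ^ 2, mul_add]
  have := hhead h
  linarith

lemma enorm2_sq {m : ℕ} (v : Fin m → ℝ) : enorm2 v ^ 2 = ∑ i, v i ^ 2 :=
  Real.sq_sqrt (Finset.sum_nonneg fun _ _ => sq_nonneg _)

lemma IsMinInterp.sub_sq_le {n p : ℕ} {x : Fin n → Fin p → ℝ} {β b : Fin p → ℝ} {ξ : Fin n → ℝ}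
    (hb : IsMinInterp x (fun i => (∑ j, x i j * β j) + ξ i) b) {R : ℝ} (hR : 0 < R)
    (hlow : ∀ u : Fin n → ℝ, R / 16 * ∑ i, u i ^ 2 ≤ ∑ l, (∑ i, x i l * u i) ^ 2) :
    ∑ j, (b j - β j) ^ 2 ≤ 6 * enorm2 β ^ 2 + 64 * enorm2 ξ ^ 2 / R := by
  obtain ⟨η, hη1, hη2⟩ := exists_small_solution x hR hlow ξ
  have h1 := hb.2 (fun j => β j + η j) fun i => by
    simp [mul_add, Finset.sum_add_distrib, hη1]
  have h2 := pow_le_pow_left₀ (show 0 ≤ enorm2 b from Real.sqrt_nonneg _) h1 2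
  rw [enorm2_sq, enorm2_sq] at h2
  rw [enorm2_sq, enorm2_sq]
  have h3 : ∑ j, (b j - β j) ^ 2 ≤ 2 * ∑ j, b j ^ 2 + 2 * ∑ j, β j ^ 2 := by
    rw [Finset.mul_sum, Finset.mul_sum, ← Finset.sum_add_distrib]
    exact Finset.sum_le_sum fun j _ => by nlinarith [sq_nonneg (b j + β j)]
  have h4 : ∑ j, (β j + η j) ^ 2 ≤ 2 * ∑ j, β j ^ 2 + 2 * ∑ j, η j ^ 2 := by
    rw [Finset.mul_sum, Finset.mul_sum, ← Finset.sum_add_distrib]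
    exact Finset.sum_le_sum fun j _ => by nlinarith [sq_nonneg (β j - η j)]
  have h5 : ∑ j, η j ^ 2 ≤ 16 * (∑ i, ξ i ^ 2) / R := by
    rw [le_div_iff₀ hR]
    linarith
  have h6 : 64 * (∑ i, ξ i ^ 2) / R = 4 * (16 * (∑ i, ξ i ^ 2) / R) := by ring
  linarith

/-- The design `x`, written in the eigenbasis `Q`, is well-conditioned: a lower isometry on the
coordinates in `H`, an upper bound on the other coordinates, and a lower bound on the transpose. -/
def GoodDesign {n p : ℕ} (l : Fin p → ℝ) (Q : Matrix (Fin p) (Fin p) ℝ) (H : Finset (Fin p))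
    (b R : ℝ) (x : Fin n → Fin p → ℝ) : Prop :=
  (∀ h : Fin p → ℝ,
    n / 16 * ∑ j ∈ H, l j * h j ^ 2 ≤ ∑ i, (∑ j ∈ H, (Qᵀ *ᵥ x i) j * h j) ^ 2) ∧
  (∀ u : Fin n → ℝ, ∑ j ∈ Hᶜ, (∑ i, (Qᵀ *ᵥ x i) j * u i) ^ 2 ≤ b * ∑ i, u i ^ 2) ∧
  ∀ u : Fin n → ℝ, R / 16 * ∑ i, u i ^ 2 ≤ ∑ j, (∑ i, (Qᵀ *ᵥ x i) j * u i) ^ 2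

lemma isClosed_setOf_goodDesign {n p : ℕ} (l : Fin p → ℝ) (Q : Matrix (Fin p) (Fin p) ℝ)
    (H : Finset (Fin p)) (b R : ℝ) :
    IsClosed {x : Fin n → Fin p → ℝ | GoodDesign l Q H b R x} := by
  have hc : ∀ i j, Continuous fun x : Fin n → Fin p → ℝ => (Qᵀ *ᵥ x i) j := by
    intro i j
    simp only [mulVec, dotProduct]
    fun_prop
  simp only [GoodDesign, Set.ofPred_and, Set.ofPred_forall]
  refine .inter (isClosed_iInter fun h => isClosed_le ?_ ?_)
    (.inter (isClosed_iInter fun u => isClosed_le ?_ ?_)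
      (isClosed_iInter fun u => isClosed_le ?_ ?_)) <;> fun_prop

lemma predNorm_sq {p : ℕ} {l : Fin p → ℝ} (hl : ∀ j, 0 ≤ l j) {Q Sig : Matrix (Fin p) (Fin p) ℝ}
    (hSig : Sig = Q * Matrix.diagonal l * Qᵀ) (d : Fin p → ℝ) :
    predNorm Sig d ^ 2 = ∑ j, l j * (Qᵀ *ᵥ d) j ^ 2 := by
  have h : d ⬝ᵥ Sig *ᵥ d = ∑ j, l j * (Qᵀ *ᵥ d) j ^ 2 := by
    rw [hSig, mul_assoc, ← mulVec_mulVec, dotProduct_mulVec, ← mulVec_mulVec, ← mulVec_transpose,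
      dotProduct]
    refine Finset.sum_congr rfl fun j _ => ?_
    rw [mulVec_diagonal]
    ring
  rw [predNorm, h, Real.sq_sqrt]
  exact Finset.sum_nonneg fun j _ => mul_nonneg (hl j) (sq_nonneg _)

/-- The prediction error of the minimum norm interpolator for a well-conditioned design. -/
lemma GoodDesign.predNorm_sq_le {n p : ℕ} {l : Fin p → ℝ} (hl : ∀ j, 0 ≤ l j)
    {Q Sig : Matrix (Fin p) (Fin p) ℝ} (hQ : Q * Qᵀ = 1)
    (hSig : Sig = Q * Matrix.diagonal l * Qᵀ) {H : Finset (Fin p)} {r R : ℝ}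
    (hr : 0 ≤ r) (hR : 0 < R) (hrR : r ≤ R) (hn : 0 < n)
    (ht : ∀ j ∈ Hᶜ, n * l j ≤ 9216 * r)
    {x : Fin n → Fin p → ℝ} (hx : GoodDesign l Q H (81 / 16 * (9216 * r)) R x)
    {β b : Fin p → ℝ} {ξ : Fin n → ℝ}
    (hb : IsMinInterp x (fun i => (∑ j, x i j * β j) + ξ i) b) :
    predNorm Sig (fun j => b j - β j) ^ 2 ≤
      200000000 * max (enorm2 β ^ 2 * r / n) (enorm2 ξ ^ 2 / n) := by
  obtain ⟨h1, h2, h3⟩ := hx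
  have hlow : ∀ u : Fin n → ℝ, R / 16 * ∑ i, u i ^ 2 ≤ ∑ l, (∑ i, x i l * u i) ^ 2 := by
    intro u
    refine (h3 u).trans (le_of_eq ?_)
    have e : ∀ j, ∑ i, (Qᵀ *ᵥ x i) j * u i = (Qᵀ *ᵥ fun l => ∑ i, x i l * u i) j := by
      intro j
      simp only [mulVec, dotProduct, Finset.sum_mul, Finset.mul_sum]
      rw [Finset.sum_comm]
      simp only [mul_assoc]
    simp_rw [e, sq]
    exact orthogonal_dotProduct hQ _ _
  have hh := hb.sub_sq_le hR hlow
  set d : Fin p → ℝ := fun j => b j - β j with hd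
  have hmain := weighted_sq_le_of_head_tail (fun i => Qᵀ *ᵥ x i) l H
    (b := 81 / 16 * (9216 * r)) (t := 9216 * r) (by positivity) (by positivity) h1 h2 ht
    (Qᵀ *ᵥ d) ξ fun i => by
      rw [orthogonal_dotProduct hQ]
      have := hb.1 i
      simp only [hd, mul_sub, Finset.sum_sub_distrib, this]
      ring
  rw [← predNorm_sq hl hSig] at hmain
  have hrot : ∑ j, (Qᵀ *ᵥ d) j ^ 2 = ∑ j, d j ^ 2 := by
    simp_rw [sq]
    exact orthogonal_dotProduct hQ _ _
  rw [hrot, ← enorm2_sq ξ] at hmain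
  have hn' : (0 : ℝ) < n := by exact_mod_cast hn
  set Ξ := enorm2 ξ ^ 2
  set B := enorm2 β ^ 2
  have hΞ : 0 ≤ Ξ := sq_nonneg _
  have hquot : r * (64 * Ξ / R) ≤ 64 * Ξ := by
    rw [mul_div_assoc', div_le_iff₀ hR]
    nlinarith
  have hrh := mul_le_mul_of_nonneg_left hh hr
  set m := max (B * r / n) (Ξ / n)
  have m1 : B * r ≤ m * n := (div_le_iff₀ hn').1 (le_max_left _ _)
  have m2 : Ξ ≤ m * n := (div_le_iff₀ hn').1 (le_max_right _ _)
  refine le_of_mul_le_mul_left ?_ hn'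
  nlinarith

/-- The law of an `n × p` array of independent standard Gaussians. -/
def gaussianArray (n p : ℕ) : Measure (Fin n → Fin p → ℝ) :=
  Measure.pi fun _ => Measure.pi fun _ => gaussianReal 0 1

instance (n p : ℕ) : IsProbabilityMeasure (gaussianArray n p) := by
  unfold gaussianArray
  infer_instance

lemma continuous_covHalf_mulVec (p : ℕ) (lam : ℕ → ℝ) (Q : Matrix (Fin p) (Fin p) ℝ) :
    Continuous fun g : Fin p → ℝ => covHalf p lam Q *ᵥ g :=
  Continuous.matrix_mulVec continuous_const continuous_id

lemma measurable_covHalf_rows (n p : ℕ) (lam : ℕ → ℝ) (Q : Matrix (Fin p) (Fin p) ℝ) :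
    Measurable fun (g : Fin n → Fin p → ℝ) i => covHalf p lam Q *ᵥ g i :=
  measurable_pi_lambda _ fun i =>
    (continuous_covHalf_mulVec p lam Q).measurable.comp (measurable_pi_apply i)

instance (p : ℕ) (lam : ℕ → ℝ) (Q : Matrix (Fin p) (Fin p) ℝ) :
    IsProbabilityMeasure (mvGaussian p lam Q) := by
  unfold mvGaussian _root_.stdGaussian
  exact Measure.isProbabilityMeasure_map (continuous_covHalf_mulVec p lam Q).measurable.aemeasurable

lemma pi_mvGaussian_eq_map (n p : ℕ) (lam : ℕ → ℝ) (Q : Matrix (Fin p) (Fin p) ℝ) :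
    (Measure.pi fun _ : Fin n => mvGaussian p lam Q) =
      (gaussianArray n p).map fun g i => covHalf p lam Q *ᵥ g i := by
  have : ∀ _ : Fin n, SigmaFinite
      (Measure.map (fun g => covHalf p lam Q *ᵥ g) (_root_.stdGaussian p)) := fun _ =>
    inferInstanceAs (SigmaFinite (mvGaussian p lam Q))
  exact (Measure.pi_map_pi (μ := fun _ : Fin n => _root_.stdGaussian p)
    (f := fun _ g => covHalf p lam Q *ᵥ g) (hμ := this) fun _ =>
    (continuous_covHalf_mulVec p lam Q).measurable.aemeasurable).symm

lemma orthogonal_sum_col {p : ℕ} {Q : Matrix (Fin p) (Fin p) ℝ} (hQ : Q * Qᵀ = 1) (j k : Fin p) :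
    ∑ m, Q m j * Q m k = if j = k then 1 else 0 := by
  have hQ' : Qᵀ * Q = 1 := mul_eq_one_comm.1 hQ
  have h := congrArg (fun M : Matrix (Fin p) (Fin p) ℝ => M j k) hQ'
  simpa [Matrix.mul_apply, Matrix.one_apply] using h

lemma transpose_mulVec_covHalf {p : ℕ} {lam : ℕ → ℝ} {Q : Matrix (Fin p) (Fin p) ℝ}
    (hQ : Q * Qᵀ = 1) (g : Fin p → ℝ) (j : Fin p) :
    (Qᵀ *ᵥ (covHalf p lam Q *ᵥ g)) j = √(lam (j + 1)) * (Qᵀ *ᵥ g) j := by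
  rw [covHalf, mulVec_mulVec, mul_assoc, ← mul_assoc, mul_eq_one_comm.1 hQ, one_mul,
    ← mulVec_mulVec, mulVec_diagonal]

lemma measurable_transpose_mulVec {n p : ℕ} (Q : Matrix (Fin p) (Fin p) ℝ) (i : Fin n)
    (j : Fin p) : Measurable fun g : Fin n → Fin p → ℝ => (Qᵀ *ᵥ g i) j := by
  simp only [mulVec, dotProduct]
  fun_prop

/-- Combining the rows of a rotated Gaussian array by a unit vector gives a standard Gaussian. -/
lemma hasGaussianImages_rows (n : ℕ) {p : ℕ} {Q : Matrix (Fin p) (Fin p) ℝ} (hQ : Q * Qᵀ = 1) :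
    HasGaussianImages (gaussianArray n p)
      fun (g : Fin n → Fin p → ℝ) (j : Fin p) (i : Fin n) => (Qᵀ *ᵥ g i) j := by
  intro u hu
  refine ⟨?_, ?_⟩
  · exact (measurable_pi_lambda _ fun _ => Finset.measurable_sum _ fun _ _ =>
      (measurable_transpose_mulVec Q _ _).mul_const _).aemeasurable
  · refine Eq.trans ?_ (map_gaussian_array (I := Fin n) (K := Fin p) (fun j i m => u i * Q m j) ?_)
    · unfold gaussianArray
      congr 1
      ext g j
      simp only [mulVec, dotProduct, transpose_apply, Finset.sum_mul]
      refine Finset.sum_congr rfl fun i _ => Finset.sum_congr rfl fun m _ => ?_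
      ring
    · intro j k
      calc _ = ∑ i, u i ^ 2 * ∑ m, Q m j * Q m k := by
            refine Finset.sum_congr rfl fun i _ => ?_
            rw [Finset.mul_sum]
            refine Finset.sum_congr rfl fun m _ => ?_
            ring
        _ = _ := by
            rw [← Finset.sum_mul, hu, one_mul, orthogonal_sum_col hQ]
            split_ifs <;> rfl

/-- Combining columns of a rotated Gaussian array by a unit vector gives a standard Gaussian. -/
lemma hasGaussianImages_columns (n : ℕ) {p : ℕ} {Q : Matrix (Fin p) (Fin p) ℝ}
    (hQ : Q * Qᵀ = 1) (H : Finset (Fin p)) :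
    HasGaussianImages (gaussianArray n p)
      fun (g : Fin n → Fin p → ℝ) (i : Fin n) (j : H) => (Qᵀ *ᵥ g i) j := by
  intro v hv
  refine ⟨?_, ?_⟩
  · exact (measurable_pi_lambda _ fun _ => Finset.measurable_sum _ fun _ _ =>
      (measurable_transpose_mulVec Q _ _).mul_const _).aemeasurable
  · refine Eq.trans ?_ (map_gaussian_array (I := Fin n) (J := Fin p)
      (fun k i m => if k = i then ∑ j : H, Q m j * v j else 0) ?_)
    · unfold gaussianArray
      congr 1
      ext g k
      simp only [mulVec, dotProduct, transpose_apply, Finset.sum_mul, ite_mul, zero_mul]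
      rw [Finset.sum_comm, Finset.sum_eq_single k]
      · simp only [if_true]
        refine Finset.sum_congr rfl fun m _ => Finset.sum_congr rfl fun j _ => ?_
        ring
      · intro i _ hi
        simp [hi.symm]
      · simp
    · intro k l
      have hnorm : ∑ m, (∑ j : H, Q m j * v j) * (∑ j : H, Q m j * v j) = 1 := by
        calc _ = ∑ m, ∑ j : H, ∑ j' : H, v j * v j' * (Q m j * Q m j') := by
              refine Finset.sum_congr rfl fun m _ => ?_
              rw [Finset.sum_mul_sum]
              refine Finset.sum_congr rfl fun j _ => Finset.sum_congr rfl fun j' _ => ?_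
              ring
          _ = ∑ j : H, ∑ j' : H, v j * v j' * ∑ m, Q m j * Q m j' := by
              rw [Finset.sum_comm]
              refine Finset.sum_congr rfl fun j _ => ?_
              rw [Finset.sum_comm]
              refine Finset.sum_congr rfl fun j' _ => ?_
              rw [Finset.mul_sum]
          _ = ∑ j : H, v j ^ 2 := by
              refine Finset.sum_congr rfl fun j _ => ?_
              simp [orthogonal_sum_col hQ, sq]
          _ = 1 := hv
      by_cases hkl : k = l
      · subst hkl
        rw [Finset.sum_eq_single k]
        · simpa using hnorm
        · intro i _ hi
          simp [hi.symm]
        · simp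
      · rw [if_neg hkl]
        refine Finset.sum_eq_zero fun i _ => Finset.sum_eq_zero fun m _ => ?_
        by_cases hki : k = i
        · simp [show l ≠ i from fun h => hkl (hki.trans h.symm)]
        · simp [hki]

/-- A Gaussian design is well-conditioned with overwhelming probability. -/
lemma measure_not_goodDesign_le {n p : ℕ} (hn : 0 < n) {lam : ℕ → ℝ}
    {Q : Matrix (Fin p) (Fin p) ℝ} (hQ : Q * Qᵀ = 1) (hlam : ∀ j : Fin p, 0 ≤ lam (j + 1))
    {H K : Finset (Fin p)} {S R : ℝ} (hH : 48 * (H.card : ℝ) ≤ n)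
    (hS : ∀ j ∈ Hᶜ, lam (j + 1) * (48 * n) ≤ S) (hSsum : ∑ j ∈ Hᶜ, lam (j + 1) ≤ S)
    (hR0 : 0 < R) (hR : ∀ j ∈ K, lam (j + 1) * (48 * n) ≤ R)
    (hRsum : ∑ j ∈ K, lam (j + 1) = R) :
    (Measure.pi fun _ : Fin n => mvGaussian p lam Q)
      {x | ¬ GoodDesign (fun j : Fin p => lam (j + 1)) Q H (81 / 16 * S) R x} ≤
      ENNReal.ofReal (6 * Real.exp (-(1 / 16) * n)) := by
  have hn' : (0 : ℝ) < n := by exact_mod_cast hn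
  have hS0 : 0 ≤ S := (Finset.sum_nonneg fun j _ => hlam j).trans hSsum
  have hmeas : MeasurableSet
      {x : Fin n → Fin p → ℝ |
        ¬ GoodDesign (fun j : Fin p => lam (j + 1)) Q H (81 / 16 * S) R x} :=
    (isClosed_setOf_goodDesign _ Q H _ R).measurableSet.compl
  rw [pi_mvGaussian_eq_map, Measure.map_apply (measurable_covHalf_rows n p lam Q) hmeas]
  have hhead := measure_exists_quadratic_lt_le (hasGaussianImages_columns n hQ H)
    (w := fun _ => 1) (S := n) (T := n) hn' hn' (fun _ => zero_le_one) (fun _ => by simp)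
    (by simp) (by simpa using hH)
  have htail := measure_exists_quadratic_gt_le (hasGaussianImages_rows n hQ)
    (w := fun j => if j ∈ Hᶜ then lam (j + 1) else 0) (S := S) (T := 48 * n) (by positivity)
    (fun j => by
      split_ifs
      exacts [hlam j, le_rfl])
    (fun j => by
      split_ifs with h
      exacts [hS j h, by simpa using hS0])
    (by simpa only [Finset.sum_ite_mem, Finset.univ_inter] using hSsum) (by simp)
  have hfull := measure_exists_quadratic_lt_le (hasGaussianImages_rows n hQ)
    (w := fun j => if j ∈ K then lam (j + 1) else 0) (S := R) (T := 48 * n) (by positivity) hR0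
    (fun j => by
      split_ifs
      exacts [hlam j, le_rfl])
    (fun j => by
      split_ifs with h
      exacts [hR j h, by simpa using hR0.le])
    (by simpa only [Finset.sum_ite_mem, Finset.univ_inter] using hRsum) (by simp)
  have hexp : Real.exp (-(48 * (n : ℝ)) / 16) ≤ Real.exp (-(1 / 16) * n) :=
    Real.exp_le_exp.2 (by linarith)
  have hexp' : Real.exp (-(n : ℝ) / 16) = Real.exp (-(1 / 16) * n) := by
    congr 1
    ring
  have hsum : ENNReal.ofReal (2 * Real.exp (-(n : ℝ) / 16)) +
      (ENNReal.ofReal (Real.exp (-(48 * (n : ℝ)) / 16)) +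
        ENNReal.ofReal (2 * Real.exp (-(48 * (n : ℝ)) / 16))) ≤
      ENNReal.ofReal (6 * Real.exp (-(1 / 16) * n)) := by
    rw [← ENNReal.ofReal_add (by positivity) (by positivity),
      ← ENNReal.ofReal_add (by positivity) (by positivity), hexp']
    refine ENNReal.ofReal_le_ofReal ?_
    linarith [Real.exp_pos (-(1 / 16) * (n : ℝ))]
  refine (measure_mono ?_).trans ((measure_union_le _ _).trans
    ((add_le_add hhead ((measure_union_le _ _).trans (add_le_add htail hfull))).trans hsum))
  intro g hg
  by_contra hcon
  simp only [Set.mem_union, Set.mem_ofPred_eq, not_or, not_exists, not_lt] at hcon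
  obtain ⟨c1, c2, c3⟩ := hcon
  refine hg ⟨fun h => ?_, fun u => ?_, fun u => ?_⟩
  · have := c1 fun j => √(lam ((j : Fin p) + 1)) * h j
    simp only [one_mul, mul_pow, Real.sq_sqrt (hlam _)] at this
    rw [Finset.sum_coe_sort H fun j => lam ((j : Fin p) + 1) * h j ^ 2] at this
    refine this.trans (le_of_eq (Finset.sum_congr rfl fun i _ => ?_))
    rw [Finset.sum_coe_sort H fun j => (Qᵀ *ᵥ g i) j * (√(lam ((j : Fin p) + 1)) * h j)]
    congr 1
    refine Finset.sum_congr rfl fun j _ => ?_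
    rw [transpose_mulVec_covHalf hQ]
    ring
  · refine le_trans (le_of_eq ?_) (c2 u)
    simp only [ite_mul, zero_mul, Finset.sum_ite_mem, Finset.univ_inter]
    refine Finset.sum_congr rfl fun j _ => ?_
    simp only [transpose_mulVec_covHalf hQ, mul_assoc]
    rw [← Finset.mul_sum, mul_pow, Real.sq_sqrt (hlam j)]
  · refine (c3 u).trans ?_
    refine Finset.sum_le_sum fun j _ => ?_
    simp only [transpose_mulVec_covHalf hQ, mul_assoc]
    rw [← Finset.mul_sum, mul_pow, Real.sq_sqrt (hlam j)]
    refine mul_le_mul_of_nonneg_right ?_ (sq_nonneg _)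
    split_ifs
    exacts [le_rfl, hlam j]

/-- The tail sum `r_k` as a sum over coordinates. -/
lemma sum_filter_eq_rsum (p : ℕ) (lam : ℕ → ℝ) {k : ℕ} (hk : 1 ≤ k) :
    ∑ j ∈ ({j : Fin p | k ≤ (j : ℕ) + 1} : Finset (Fin p)), lam ((j : ℕ) + 1) = rsum p lam k := by
  unfold rsum
  refine Finset.sum_bij (fun (j : Fin p) _ => (j : ℕ) + 1) ?_ ?_ ?_ ?_
  · intro j hj
    simp only [Finset.mem_filter, Finset.mem_univ, true_and] at hj
    simp only [Finset.mem_Icc]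
    omega
  · intro a _ b _ hab
    ext
    omega
  · intro m hm
    rw [Finset.mem_Icc] at hm
    exact ⟨⟨m - 1, by omega⟩, by simp; omega, by simp; omega⟩
  · simp

lemma rsum_anti {p : ℕ} {lam : ℕ → ℝ} (hlam : ∀ k, 1 ≤ k → k ≤ p → 0 ≤ lam k) {k l : ℕ}
    (hk : 1 ≤ k) (hkl : k ≤ l) : rsum p lam l ≤ rsum p lam k := by
  refine Finset.sum_le_sum_of_subset_of_nonneg (Finset.Icc_subset_Icc_left hkl) fun i hi _ => ?_
  rw [Finset.mem_Icc] at hi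
  exact hlam i (by omega) hi.2

lemma mul_le_rsum {p : ℕ} {lam : ℕ → ℝ} (hlam : ∀ k, 1 ≤ k → k ≤ p → 0 ≤ lam k)
    (hanti : ∀ j k, 1 ≤ j → j ≤ k → k ≤ p → lam k ≤ lam j) {k m : ℕ} (hk : 1 ≤ k)
    (hkm : 2 * k ≤ m) (hmp : m ≤ p) : k * lam m ≤ rsum p lam k := by
  calc k * lam m ≤ ((m + 1 - k : ℕ) : ℝ) * lam m := by
        refine mul_le_mul_of_nonneg_right ?_ (hlam m (by omega) hmp)
        exact_mod_cast (by omega : k ≤ m + 1 - k)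
    _ = ∑ _i ∈ Finset.Icc k m, lam m := by simp
    _ ≤ ∑ i ∈ Finset.Icc k m, lam i := Finset.sum_le_sum fun i hi => by
        rw [Finset.mem_Icc] at hi
        exact hanti i m (by omega) hi.2 hmp
    _ ≤ rsum p lam k := by
        refine Finset.sum_le_sum_of_subset_of_nonneg (Finset.Icc_subset_Icc_right hmp)
          fun i hi _ => ?_
        rw [Finset.mem_Icc] at hi
        exact hlam i (by omega) hi.2

/-- Outer-measure form of passing to the complement of an event controlled by the law of `X`. -/
lemma ofReal_one_sub_le_of_law {Ω E : Type*} [MeasurableSpace Ω] [MeasurableSpace E]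
    {P : Measure Ω} [IsProbabilityMeasure P] {ν : Measure E} [IsProbabilityMeasure ν] {X : Ω → E}
    (hX : Measure.map X P = ν) {B : Set E} (hB : MeasurableSet B) {e : ℝ}
    (he : 0 ≤ e) (hBe : ν B ≤ ENNReal.ofReal e) {A : Set Ω} (hA : ∀ᵐ ω ∂P, X ω ∉ B → ω ∈ A) :
    ENNReal.ofReal (1 - e) ≤ P A := by
  have hXm : AEMeasurable X P := by
    by_contra h
    rw [Measure.map_of_not_aemeasurable h] at hX
    exact IsProbabilityMeasure.ne_zero ν hX.symm
  have hAc : P Aᶜ ≤ ENNReal.ofReal e := by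
    refine (measure_mono_ae ?_).trans
      ((Measure.map_apply_of_aemeasurable hXm hB).symm.le.trans (hX ▸ hBe))
    filter_upwards [hA] with ω hω hωA
    by_contra h
    exact hωA (hω h)
  rw [ENNReal.ofReal_sub _ he, ENNReal.ofReal_one, tsub_le_iff_right]
  calc (1 : ℝ≥0∞) = P (A ∪ Aᶜ) := by rw [Set.union_compl_self, measure_univ]
    _ ≤ P A + P Aᶜ := measure_union_le _ _
    _ ≤ P A + ENNReal.ofReal e := by gcongr

/-- Corollary 1: in the model `Y = Xβ* + ξ` with `p ≥ n` and
`k* ≤ c n`, there are absolute constants `c', c₁, c₂, C > 0` such that with probability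
at least `1 - c₁ e^{-c₂ n}` the minimum `ℓ2`-norm interpolator satisfies
`‖Σ^{1/2}(β̂ - β*)‖₂² ≤ C max( ‖β*‖₂² r_{c'n}(Σ)/n , ‖ξ‖₂²/n )`. -/
theorem stmt2 :
    ∃ c0 > (0 : ℝ), ∃ c > (0 : ℝ), ∃ c' > (0 : ℝ),
    ∃ c1 > (0 : ℝ), ∃ c2 > (0 : ℝ), ∃ C > (0 : ℝ),
    ∀ (n p : ℕ), 0 < n → n ≤ p →
    ∀ (lam : ℕ → ℝ) (Porth Sig : Matrix (Fin p) (Fin p) ℝ),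
      (∀ k, 1 ≤ k → k ≤ p → 0 ≤ lam k) →
      (∀ j k, 1 ≤ j → j ≤ k → k ≤ p → lam k ≤ lam j) →
      Porth * Porthᵀ = 1 →
      Sig = Porth * Matrix.diagonal (fun i : Fin p => lam ((i : ℕ) + 1)) * Porthᵀ →
      n ≤ Sig.rank →
    ∀ (Ω : Type) (_ : MeasurableSpace Ω) (P : Measure Ω), IsProbabilityMeasure P →
    ∀ (X : Ω → Fin n → Fin p → ℝ) (ξ : Ω → Fin n → ℝ) (βstar : Fin p → ℝ)
      (βhat : Ω → Fin p → ℝ),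
      Measure.map X P = (Measure.pi fun _ : Fin n => mvGaussian p lam Porth) →
      (∀ᵐ ω ∂P, IsMinInterp (X ω)
        (fun i => (∑ j, X ω i j * βstar j) + ξ ω i) (βhat ω)) →
      (kstarSet p lam c0 n).Nonempty → (kstar p lam c0 n : ℝ) ≤ c * n →
      ENNReal.ofReal (1 - c1 * Real.exp (-c2 * n)) ≤
        P {ω | predNorm Sig (fun j => βhat ω j - βstar j) ^ 2 ≤
               C * max (enorm2 βstar ^ 2 * rsum p lam (Nat.ceil (c' * n)) / n)
                       (enorm2 (ξ ω) ^ 2 / n)} := by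
  refine ⟨48, by norm_num, 1 / 192, by norm_num, 1 / 192, by norm_num, 6, by norm_num, 1 / 16,
    by norm_num, 200000000, by norm_num, ?_⟩
  intro n p hn _ lam Q Sig hlam hanti hQ hSig _ Ω _ P _ X ξ β b hX hb hne hk
  have hn' : (0 : ℝ) < n := by exact_mod_cast hn
  obtain ⟨hk1, hkp, hkr⟩ : kstar p lam 48 n ∈ kstarSet p lam 48 n := Nat.sInf_mem hne
  set k := kstar p lam 48 n
  set k0 := Nat.ceil (1 / 192 * (n : ℝ)) with hk0
  have hlk : 0 < lam k := by
    refine lt_of_le_of_ne (hlam k hk1 hkp) fun h => ?_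
    rw [← h, div_zero] at hkr
    linarith
  rw [le_div_iff₀ hlk] at hkr
  have hk' : (1 : ℝ) ≤ k := by exact_mod_cast hk1
  have hceil : 1 / 192 * (n : ℝ) ≤ k0 := Nat.le_ceil _
  have hceil' : (k0 : ℝ) < 1 / 192 * (n : ℝ) + 1 := Nat.ceil_lt_add_one (by positivity)
  have hkk0 : k ≤ k0 := by exact_mod_cast hk.trans hceil
  have hk01 : 1 ≤ k0 := hk1.trans hkk0
  have hrR : rsum p lam k0 ≤ rsum p lam k := rsum_anti hlam hk1 hkk0
  have hr0 : 0 ≤ rsum p lam k0 := Finset.sum_nonneg fun i hi => by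
    rw [Finset.mem_Icc] at hi
    exact hlam i (by omega) hi.2
  have hlam' : ∀ j : Fin p, 0 ≤ lam (j + 1) := fun j => hlam _ (by omega) (by omega)
  set H : Finset (Fin p) := {j : Fin p | (j : ℕ) + 1 < 2 * k0} with hH
  have hHc : Hᶜ = ({j : Fin p | 2 * k0 ≤ (j : ℕ) + 1} : Finset (Fin p)) := by
    ext j
    simp [hH]
  set K : Finset (Fin p) := {j : Fin p | k ≤ (j : ℕ) + 1} with hK
  have hcard : H.card ≤ 2 * k0 := by
    rw [← Finset.card_range (2 * k0)]
    refine Finset.card_le_card_of_injOn (fun j : Fin p => (j : ℕ)) ?_ Fin.val_injective.injOn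
    intro j hj
    simp only [hH, Finset.coe_filter, Finset.mem_univ, true_and, Set.mem_ofPred_eq] at hj
    simp only [Finset.coe_range, Set.mem_Iio]
    omega
  have hcard' : 48 * (H.card : ℝ) ≤ n := by
    have : (H.card : ℝ) ≤ 2 * k0 := by exact_mod_cast hcard
    linarith
  have htail : ∀ j ∈ Hᶜ, lam ((j : ℕ) + 1) * (48 * n) ≤ 9216 * rsum p lam k0 := by
    intro j hj
    rw [hHc, Finset.mem_filter] at hj
    have h1 := mul_le_rsum hlam hanti hk01 hj.2 (by omega)
    have h2 := mul_le_mul_of_nonneg_left hceil (hlam' j)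
    nlinarith
  have hbad := measure_not_goodDesign_le hn hQ hlam' (H := H) (K := K)
    (S := 9216 * rsum p lam k0) (R := rsum p lam k) hcard' htail
    (by
      rw [hHc, sum_filter_eq_rsum p lam (by omega)]
      linarith [rsum_anti hlam hk01 (by omega : k0 ≤ 2 * k0)])
    (by nlinarith)
    (fun j hj => by
      rw [hK, Finset.mem_filter] at hj
      have := hanti k (j + 1) hk1 hj.2 (by omega)
      nlinarith)
    (sum_filter_eq_rsum p lam hk1)
  refine ofReal_one_sub_le_of_law hX (isClosed_setOf_goodDesign _ Q H _ _).measurableSet.compl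
    (by positivity) hbad ?_
  filter_upwards [hb] with ω hω hgood
  rw [Set.notMem_compl_iff] at hgood
  refine GoodDesign.predNorm_sq_le hlam' hQ hSig hr0 (by nlinarith) hrR hn (fun j hj => ?_) hgood hω
  have h1 := htail j hj
  have h2 : 0 ≤ n * lam (j + 1) := mul_nonneg hn'.le (hlam' j)
  linarith
end
end

section
/- There exists an absolute constant c > 0 such that if the constant c₀ in the definition of k* satisfies c₀ ≥ c, then for a random matrix X ∈ ℝ^{n×p} (p ≥ n) with i.i.d. N(0,Σ) rows, where Σ has rank at least n, with probability at least 1 − 2e^{−n} the smallest singular value of X satisfies σ_n(X) ≥ √(r_{k*}(Σ)) / 4. -/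
open MeasureTheory ProbabilityTheory Matrix Finset
open scoped ENNReal Classical

noncomputable section

/-- The smallest (`n`-th) singular value of an `n × p` design given as a function
`M : Fin n → Fin p → ℝ`: `σ_n(M) = inf_{‖x‖₂ = 1} ‖Mᵀ x‖₂`. -/
def sminFn {n p : ℕ} (M : Fin n → Fin p → ℝ) : ℝ :=
  sInf {s : ℝ | ∃ x : Fin n → ℝ, enorm2 x = 1 ∧
    s = enorm2 (fun j : Fin p => ∑ i, M i j * x i)}

section Nets

variable {E F : Type*} [NormedAddCommGroup E] [NormedSpace ℝ E]
  [NormedAddCommGroup F] [NormedSpace ℝ F]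

/-- The ball of radius `2` has a `1`-net of at most `5 ^ dim` points. -/
theorem exists_net_closedBall_two (E : Type*) [NormedAddCommGroup E] [NormedSpace ℝ E]
    [FiniteDimensional ℝ E] :
    ∃ s : Finset E, s.card ≤ 5 ^ Module.finrank ℝ E ∧ (∀ c ∈ s, ‖c‖ ≤ 2) ∧
      ∀ x : E, ‖x‖ ≤ 2 → ∃ y ∈ s, ‖x - y‖ ≤ 1 := by
  let Sep : Finset E → Prop := fun s =>
    (∀ c ∈ s, ‖c‖ ≤ 2) ∧ ∀ c ∈ s, ∀ d ∈ s, c ≠ d → 1 ≤ ‖c - d‖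
  let C : Set ℕ := {m | ∃ s : Finset E, s.card = m ∧ Sep s}
  have hbdd : BddAbove C := by
    refine ⟨5 ^ Module.finrank ℝ E, ?_⟩
    rintro m ⟨s, rfl, hs⟩
    exact Besicovitch.card_le_of_separated s hs.1 hs.2
  have hne : C.Nonempty := ⟨0, ∅, by simp [Sep]⟩
  obtain ⟨s, hcard, hs⟩ := Nat.sSup_mem hne hbdd
  refine ⟨s, Besicovitch.card_le_of_separated s hs.1 hs.2, hs.1, fun x hx => ?_⟩
  by_contra! hfar
  have hxs : x ∉ s := fun h => by
    have := hfar x h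
    simp at this
    linarith
  have hmem : s.card + 1 ∈ C := by
    refine ⟨insert x s, card_insert_of_notMem hxs, ?_, ?_⟩
    · intro c hc
      rcases mem_insert.1 hc with rfl | hc
      exacts [hx, hs.1 c hc]
    · intro c hc d hd hcd
      rcases mem_insert.1 hc with rfl | hc' <;> rcases mem_insert.1 hd with rfl | hd'
      · exact absurd rfl hcd
      · exact (hfar d hd').le
      · rw [norm_sub_rev]
        exact (hfar c hc').le
      · exact hs.2 c hc' d hd' hcd
  have := le_csSup hbdd hmem
  omega

theorem opNorm_le_of_net_s6 {s : Finset E} (hs : ∀ x : E, ‖x‖ ≤ 2 → ∃ y ∈ s, ‖x - y‖ ≤ 1)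
    {a : ℝ} (L : E →L[ℝ] F) (hL : ∀ y ∈ s, ‖L y‖ ≤ a) : ‖L‖ ≤ a := by
  have ha : 0 ≤ a := by
    obtain ⟨y, hy, -⟩ := hs 0 (by simp)
    exact (norm_nonneg _).trans (hL y hy)
  have key : ‖L‖ ≤ (a + ‖L‖) / 2 := by
    refine L.opNorm_le_of_unit_norm (by positivity) fun x hx => ?_
    obtain ⟨y, hy, hxy⟩ := hs ((2 : ℝ) • x) (by simp [norm_smul, hx])
    have h1 : ‖L ((2 : ℝ) • x)‖ ≤ ‖L y‖ + ‖L‖ := by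
      calc ‖L ((2 : ℝ) • x)‖ = ‖L y + L ((2 : ℝ) • x - y)‖ := by rw [← map_add]; simp
        _ ≤ ‖L y‖ + ‖L ((2 : ℝ) • x - y)‖ := norm_add_le _ _
        _ ≤ ‖L y‖ + ‖L‖ := by
            gcongr
            exact L.le_of_opNorm_le_of_le le_rfl hxy |>.trans (by simp)
    rw [map_smul, norm_smul] at h1
    have h2 := hL y hy
    norm_num at h1
    linarith
  linarith

theorem abs_apply_self_le_of_net [FiniteDimensional ℝ E] {s : Finset E}
    (hs : ∀ x : E, ‖x‖ ≤ 2 → ∃ y ∈ s, ‖x - y‖ ≤ 1)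
    (B : E →ₗ[ℝ] E →ₗ[ℝ] ℝ) {a : ℝ} (hB : ∀ x ∈ s, ∀ y ∈ s, |B x y| ≤ a) (x : E) :
    |B x x| ≤ a * ‖x‖ ^ 2 := by
  let L : E →L[ℝ] E →L[ℝ] ℝ :=
    LinearMap.toContinuousLinearMap
      ((LinearMap.toContinuousLinearMap (𝕜 := ℝ) (E := E) (F' := ℝ)).toLinearMap ∘ₗ B)
  have hL : ∀ x y, L x y = B x y := fun x y => rfl
  have hnorm : ‖L‖ ≤ a := opNorm_le_of_net_s6 hs L fun x hx =>
    opNorm_le_of_net_s6 hs (L x) fun y hy => by simpa [hL] using hB x hx y hy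
  calc |B x x| = ‖L x x‖ := by rw [hL, Real.norm_eq_abs]
    _ ≤ ‖L‖ * ‖x‖ * ‖x‖ := L.le_opNorm₂ x x
    _ ≤ a * ‖x‖ * ‖x‖ := by gcongr
    _ = a * ‖x‖ ^ 2 := by ring

end Nets

theorem abs_apply_le_of_quadratic {E : Type*} [NormedAddCommGroup E] [InnerProductSpace ℝ E]
    (B : E →ₗ[ℝ] E →ₗ[ℝ] ℝ) (hsymm : ∀ x y, B x y = B y x) {a : ℝ} {x y : E}
    (hadd : |B (x + y) (x + y)| ≤ a * ‖x + y‖ ^ 2)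
    (hsub : |B (x - y) (x - y)| ≤ a * ‖x - y‖ ^ 2) :
    |B x y| ≤ a * (‖x‖ ^ 2 + ‖y‖ ^ 2) / 2 := by
  have hpol : 4 * B x y = B (x + y) (x + y) - B (x - y) (x - y) := by
    simp only [map_add, map_sub, LinearMap.add_apply, LinearMap.sub_apply, hsymm y x]
    ring
  have hpar := parallelogram_law_with_norm ℝ x y
  have hsum : a * ‖x + y‖ ^ 2 + a * ‖x - y‖ ^ 2 = 2 * (a * (‖x‖ ^ 2 + ‖y‖ ^ 2)) := by
    linear_combination a * hpar
  rw [abs_le] at *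
  constructor <;> linarith [hadd.1, hadd.2, hsub.1, hsub.2]

theorem exp_neg_add_two_mul_sq_le_one_sub {z : ℝ} (hz : |z| ≤ 1 / 2) :
    Real.exp (-(z + 2 * z ^ 2)) ≤ 1 - z := by
  have hpos : 0 < 1 - z := by linarith [(abs_le.1 hz).2]
  have hlog := Real.abs_log_sub_add_sum_range_le (x := z) (by linarith) 1
  have hdiv : |z| ^ 2 / (1 - |z|) ≤ 2 * z ^ 2 := by
    rw [div_le_iff₀ (by linarith), sq_abs]
    nlinarith [sq_nonneg z]
  rw [← Real.le_log_iff_exp_le hpos]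
  simp only [range_one, sum_singleton, zero_add, pow_one, Nat.cast_zero, div_one,
    Nat.reduceAdd] at hlog
  linarith [(abs_le.1 hlog).1]

theorem lintegral_exp_sq_sub_gaussianReal_le (v : NNReal) {u : ℝ} (hu : |u * v| ≤ 1 / 4) :
    ∫⁻ x, ENNReal.ofReal (Real.exp (u * (x ^ 2 - v))) ∂(gaussianReal 0 v) ≤
      ENNReal.ofReal (Real.exp (4 * (u * v) ^ 2)) := by
  by_cases hv : v = 0
  · subst hv
    simp
  have hv0 : (0 : ℝ) < v := by positivity
  obtain ⟨hu1, hu2⟩ := abs_le.1 hu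
  set z : ℝ := 2 * (u * v) with hz
  have hz1 : 0 < 1 - z := by linarith
  have hb : 0 < (1 - z) / (2 * v) := by positivity
  rw [gaussianReal_of_var_ne_zero _ hv, lintegral_withDensity_eq_lintegral_mul _
    (measurable_gaussianPDF _ _) (by fun_prop)]
  have hfun : ∀ x : ℝ, (gaussianPDF 0 v * fun x => ENNReal.ofReal (Real.exp (u * (x ^ 2 - v)))) x =
      ENNReal.ofReal ((√(2 * Real.pi * v))⁻¹ * Real.exp (-(u * v)) *
        Real.exp (-((1 - z) / (2 * v)) * x ^ 2)) := by
    intro x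
    rw [Pi.mul_apply, gaussianPDF, ← ENNReal.ofReal_mul (gaussianPDFReal_nonneg _ _ _),
      gaussianPDFReal, mul_assoc _ (Real.exp _), mul_assoc _ (Real.exp _), ← Real.exp_add,
      ← Real.exp_add]
    congr 3
    rw [hz]
    field_simp
    ring
  simp_rw [hfun]
  rw [← ofReal_integral_eq_lintegral_ofReal ((integrable_exp_neg_mul_sq hb).const_mul _)
    (ae_of_all _ fun x => by positivity), integral_const_mul, integral_gaussian]
  apply ENNReal.ofReal_le_ofReal
  have hsq : √(Real.pi / ((1 - z) / (2 * v))) = √(2 * Real.pi * v) * (√(1 - z))⁻¹ := by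
    rw [← Real.sqrt_inv, ← Real.sqrt_mul (by positivity)]
    congr 1
    field_simp
  have hs : √(2 * Real.pi * v) ≠ 0 := by positivity
  have hexp : Real.exp (-(u * v + 4 * (u * v) ^ 2)) ≤ √(1 - z) := by
    apply Real.le_sqrt_of_sq_le
    rw [← Real.exp_nat_mul]
    refine le_trans (le_of_eq ?_)
      (exp_neg_add_two_mul_sq_le_one_sub (z := z) (by rw [abs_le]; constructor <;> linarith))
    congr 1
    rw [hz]; push_cast; ring
  have hs1 : 0 < √(1 - z) := by positivity
  rw [hsq]
  calc _ = Real.exp (-(u * v)) * (√(1 - z))⁻¹ := by field_simp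
    _ ≤ Real.exp (-(u * v)) * (Real.exp (-(u * v + 4 * (u * v) ^ 2)))⁻¹ := by gcongr
    _ = _ := by rw [← Real.exp_neg, ← Real.exp_add]; congr 1; ring

/-- One-sided Chernoff bound for weighted sums of centred squares of independent Gaussians; the
sign `e` selects the tail. -/
theorem measure_weighted_sq_sub_tail_le {ι : Type*} [Fintype ι] {v : NNReal} (hv : v ≠ 0) {w : ι → ℝ}
    {b r δ e : ℝ} (hb : 0 < b) (hw0 : ∀ j, 0 ≤ w j) (hwb : ∀ j, w j ≤ b) (hr : ∑ j, w j = r)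
    (hδ : 0 < δ) (hδ1 : δ ≤ 1) (he : |e| = 1) :
    (Measure.pi fun _ : ι => gaussianReal 0 v)
        {z | δ * r * v < e * ∑ j, w j * (z j ^ 2 - v)} ≤
      ENNReal.ofReal (Real.exp (-(δ ^ 2 * r / (16 * b)))) := by
  have hv0 : (0 : ℝ) < v := by positivity
  set t : ℝ := δ / (8 * b * v) with ht
  have ht0 : 0 < t := by positivity
  have htv : t * v = δ / (8 * b) := by rw [ht]; field_simp
  have he2 : e ^ 2 = 1 := by rw [← sq_abs, he, one_pow]
  set μ := Measure.pi fun _ : ι => gaussianReal 0 v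
  have hu : ∀ j, |t * e * w j * v| ≤ 1 / 4 := fun j => by
    have : |t * e * w j * v| = (t * v) * w j := by
      rw [abs_mul, abs_mul, abs_mul, he, abs_of_pos ht0, abs_of_pos hv0, abs_of_nonneg (hw0 j)]
      ring
    rw [this, htv, div_mul_eq_mul_div, div_le_iff₀ (by positivity)]
    nlinarith [hw0 j, hwb j]
  have hmgf : ∫⁻ z, ENNReal.ofReal (Real.exp (t * (e * ∑ j, w j * (z j ^ 2 - v)))) ∂μ ≤
      ENNReal.ofReal (Real.exp (δ ^ 2 * r / (16 * b))) := by
    have hprod : ∀ z : ι → ℝ,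
        ENNReal.ofReal (Real.exp (t * (e * ∑ j, w j * (z j ^ 2 - v)))) =
          ∏ j, ENNReal.ofReal (Real.exp (t * e * w j * (z j ^ 2 - v))) := fun z => by
      rw [← ENNReal.ofReal_prod_of_nonneg fun j _ => (Real.exp_pos _).le, ← Real.exp_sum,
        mul_sum, mul_sum]
      simp only [mul_assoc]
    have hmeas : ∀ j, Measurable fun x : ℝ =>
        ENNReal.ofReal (Real.exp (t * e * w j * (x ^ 2 - v))) := fun j => by fun_prop
    have hind : iIndepFun (fun j (z : ι → ℝ) =>
        ENNReal.ofReal (Real.exp (t * e * w j * (z j ^ 2 - v)))) μ :=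
      iIndepFun_pi fun j => (hmeas j).aemeasurable
    simp_rw [hprod]
    rw [lintegral_prod_eq_prod_lintegral_of_indepFun _ _ hind
      fun j => (hmeas j).comp (measurable_pi_apply j)]
    have hone : ∀ j, ∫⁻ z, ENNReal.ofReal (Real.exp (t * e * w j * (z j ^ 2 - v))) ∂μ ≤
        ENNReal.ofReal (Real.exp (4 * (t * e * w j * v) ^ 2)) := fun j => by
      rw [(measurePreserving_eval (fun _ : ι => gaussianReal 0 v) j).lintegral_comp (hmeas j)]
      exact lintegral_exp_sq_sub_gaussianReal_le v (hu j)
    refine (prod_le_prod' fun j _ => hone j).trans ?_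
    rw [← ENNReal.ofReal_prod_of_nonneg fun j _ => (Real.exp_pos _).le, ← Real.exp_sum]
    apply ENNReal.ofReal_le_ofReal
    apply Real.exp_le_exp.2
    calc ∑ j, 4 * (t * e * w j * v) ^ 2
        ≤ ∑ j, 4 * (t * v) ^ 2 * b * w j := sum_le_sum fun j _ => by
          have : 4 * (t * e * w j * v) ^ 2 = 4 * (t * v) ^ 2 * w j * w j := by
            linear_combination 4 * (t * w j * v) ^ 2 * he2
          rw [this]
          have := hw0 j
          have := hwb j
          gcongr
      _ = δ ^ 2 * r / (16 * b) := by
          rw [← mul_sum, hr, htv]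
          field_simp
          ring
  have hsub : {z : ι → ℝ | δ * r * v < e * ∑ j, w j * (z j ^ 2 - v)} ⊆
      {z | ENNReal.ofReal (Real.exp (δ ^ 2 * r / (8 * b))) ≤
        ENNReal.ofReal (Real.exp (t * (e * ∑ j, w j * (z j ^ 2 - v))))} := fun z hz => by
    apply ENNReal.ofReal_le_ofReal
    apply Real.exp_le_exp.2
    calc δ ^ 2 * r / (8 * b) = t * (δ * r * v) := by rw [ht]; field_simp
      _ ≤ _ := by
        have := le_of_lt (Set.mem_ofPred_eq ▸ hz)
        gcongr
  have hpos : ENNReal.ofReal (Real.exp (δ ^ 2 * r / (8 * b))) ≠ 0 := by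
    simp [Real.exp_pos]
  refine (measure_mono hsub).trans
    ((meas_ge_le_lintegral_div (Measurable.aemeasurable (by fun_prop)) hpos ENNReal.ofReal_ne_top).trans ?_)
  refine (ENNReal.div_le_div_right hmgf _).trans (le_of_eq ?_)
  rw [← ENNReal.ofReal_div_of_pos (Real.exp_pos _), ← Real.exp_sub]
  congr 2
  field_simp
  ring

theorem measure_abs_weighted_sq_sub_tail_le {ι : Type*} [Fintype ι] {v : NNReal} (hv : v ≠ 0) {w : ι → ℝ}
    {b r δ : ℝ} (hb : 0 < b) (hw0 : ∀ j, 0 ≤ w j) (hwb : ∀ j, w j ≤ b) (hr : ∑ j, w j = r)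
    (hδ : 0 < δ) (hδ1 : δ ≤ 1) :
    (Measure.pi fun _ : ι => gaussianReal 0 v)
        {z | δ * r * v < |∑ j, w j * (z j ^ 2 - v)|} ≤
      2 * ENNReal.ofReal (Real.exp (-(δ ^ 2 * r / (16 * b)))) := by
  have hsub : {z : ι → ℝ | δ * r * v < |∑ j, w j * (z j ^ 2 - v)|} ⊆
      {z | δ * r * v < 1 * ∑ j, w j * (z j ^ 2 - v)} ∪
        {z | δ * r * v < -1 * ∑ j, w j * (z j ^ 2 - v)} := fun z hz => by
    simpa [lt_abs] using hz
  refine (measure_mono hsub).trans ((measure_union_le _ _).trans ?_)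
  rw [two_mul]
  exact add_le_add
    (measure_weighted_sq_sub_tail_le hv hb hw0 hwb hr hδ hδ1 (by simp))
    (measure_weighted_sq_sub_tail_le hv hb hw0 hwb hr hδ hδ1 (by simp))

/-- The image of a standard Gaussian matrix `G` under `G ↦ Qᵀ Gᵀ x`, with `Q` orthogonal, has
independent centred Gaussian entries of variance `‖x‖²`. -/
theorem map_orthogonal_combination_pi_gaussianReal {n p : ℕ} {Q : Matrix (Fin p) (Fin p) ℝ}
    (hQ : Qᵀ * Q = 1) (x : Fin n → ℝ) {v : NNReal} (hv : (v : ℝ) = ∑ i, x i ^ 2) :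
    Measure.map (fun (G : Fin n → Fin p → ℝ) (j : Fin p) => ∑ k, Q k j * ∑ i, G i k * x i)
        (Measure.pi fun _ : Fin n => Measure.pi fun _ : Fin p => gaussianReal 0 1) =
      Measure.pi fun _ : Fin p => gaussianReal 0 v := by
  set μ := Measure.pi fun _ : Fin n => Measure.pi fun _ : Fin p => gaussianReal 0 1
  set f := fun (G : Fin n → Fin p → ℝ) (j : Fin p) => ∑ k, Q k j * ∑ i, G i k * x i
  have hf : Measurable f := by fun_prop
  apply (MeasurableEquiv.toLp 2 (Fin p → ℝ)).map_measurableEquiv_injective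
  have : IsProbabilityMeasure (μ.map f) := Measure.isProbabilityMeasure_map hf.aemeasurable
  apply Measure.ext_of_charFun (E := EuclideanSpace ℝ (Fin p))
  ext t
  have hq : ∑ k, (∑ j, Q k j * t j) ^ 2 = ∑ j, t j ^ 2 := by
    have h1 : (Q *ᵥ t.ofLp) ⬝ᵥ (Q *ᵥ t.ofLp) = t.ofLp ⬝ᵥ t.ofLp := by
      rw [dotProduct_mulVec, vecMul_mulVec, hQ, vecMul_one]
    simpa [dotProduct, mulVec, pow_two] using h1
  rw [MeasurableEquiv.coe_toLp, charFun_pi]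
  simp_rw [charFun_gaussianReal]
  rw [charFun_apply, integral_map (by fun_prop) (by fun_prop), integral_map (by fun_prop) (by fun_prop)]
  have hexp : ∀ G : Fin n → Fin p → ℝ,
      Complex.exp (inner ℝ (WithLp.toLp 2 (f G)) t * Complex.I) =
        ∏ i, ∏ k, Complex.exp (((x i * ∑ j, Q k j * t j : ℝ) : ℂ) * (G i k) * Complex.I) := by
    intro G
    simp_rw [← Complex.exp_sum, ← sum_mul]
    congr 2
    norm_cast
    simp only [f, PiLp.inner_apply, RCLike.inner_apply, conj_trivial, mul_sum, sum_mul]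
    calc _ = ∑ j, ∑ k, ∑ i, x i * (Q k j * t j) * G i k := by
          refine sum_congr rfl fun j _ => sum_congr rfl fun k _ => sum_congr rfl fun i _ => ?_
          ring
      _ = ∑ k, ∑ j, ∑ i, x i * (Q k j * t j) * G i k := sum_comm
      _ = ∑ k, ∑ i, ∑ j, x i * (Q k j * t j) * G i k := sum_congr rfl fun k _ => sum_comm
      _ = _ := sum_comm
  simp_rw [hexp]
  rw [integral_fintype_prod_eq_prod (fun i (g : Fin p → ℝ) =>
    ∏ k, Complex.exp (((x i * ∑ j, Q k j * t j : ℝ) : ℂ) * (g k) * Complex.I))]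
  have hrow : ∀ i, ∫ g : Fin p → ℝ, ∏ k, Complex.exp (((x i * ∑ j, Q k j * t j : ℝ) : ℂ) *
      (g k) * Complex.I) ∂(Measure.pi fun _ : Fin p => gaussianReal 0 1) =
        Complex.exp (-((x i ^ 2 * ∑ j, t j ^ 2 : ℝ) : ℂ) / 2) := fun i => by
    rw [integral_fintype_prod_eq_prod (fun k (g : ℝ) =>
      Complex.exp (((x i * ∑ j, Q k j * t j : ℝ) : ℂ) * g * Complex.I))]
    simp_rw [← charFun_apply_real, charFun_gaussianReal, ← Complex.exp_sum]
    congr 1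
    rw [← hq, mul_sum]
    push_cast
    rw [← sum_neg_distrib, sum_div]
    exact sum_congr rfl fun k _ => by ring
  simp_rw [hrow, ← Complex.exp_sum]
  congr 1
  have hv' : ((v : ℝ) : ℂ) = ∑ i, (x i : ℂ) ^ 2 := by rw [hv]; push_cast; rfl
  rw [← sum_div, sum_neg_distrib]
  push_cast
  rw [← sum_mul, ← hv', mul_sum, ← sum_neg_distrib, sum_div]
  exact sum_congr rfl fun j _ => by ring

/-- The vector `Qᵀ Gᵀ x`, as a linear function of `x`. -/
def rotatedCombination {n p : ℕ} (Q : Matrix (Fin p) (Fin p) ℝ) (G : Fin n → Fin p → ℝ) :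
    EuclideanSpace ℝ (Fin n) →ₗ[ℝ] Fin p → ℝ where
  toFun x j := ∑ k, Q k j * ∑ i, G i k * x i
  map_add' x y := by
    ext j
    simp [mul_add, sum_add_distrib]
  map_smul' c x := by
    ext j
    simp only [PiLp.smul_apply, smul_eq_mul, RingHom.id_apply, Pi.smul_apply, mul_sum]
    exact sum_congr rfl fun k _ => sum_congr rfl fun i _ => by ring

/-- The bilinear form `(x, y) ↦ ∑ w_j Z(x)_j Z(y)_j - r ⟪x, y⟫`. -/
def centredGram {n p : ℕ} (w : Fin p → ℝ) (r : ℝ)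
    (Z : EuclideanSpace ℝ (Fin n) →ₗ[ℝ] Fin p → ℝ) :
    EuclideanSpace ℝ (Fin n) →ₗ[ℝ] EuclideanSpace ℝ (Fin n) →ₗ[ℝ] ℝ :=
  LinearMap.mk₂ ℝ (fun x y => ∑ j, w j * (Z x j * Z y j) - r * inner ℝ x y)
    (fun x x' y => by
      simp only [map_add, Pi.add_apply, inner_add_left, add_mul, mul_add, sum_add_distrib]; ring)
    (fun c x y => by
      simp only [map_smul, Pi.smul_apply, smul_eq_mul, real_inner_smul_left, mul_sub, mul_sum]
      congr 1
      · exact sum_congr rfl fun j _ => by ring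
      · ring)
    (fun x y y' => by
      simp only [map_add, Pi.add_apply, inner_add_right, mul_add, sum_add_distrib]; ring)
    (fun c x y => by
      simp only [map_smul, Pi.smul_apply, smul_eq_mul, real_inner_smul_right, mul_sub, mul_sum]
      congr 1
      · exact sum_congr rfl fun j _ => by ring
      · ring)

theorem centredGram_apply {n p : ℕ} (w : Fin p → ℝ) (r : ℝ)
    (Z : EuclideanSpace ℝ (Fin n) →ₗ[ℝ] Fin p → ℝ) (x y : EuclideanSpace ℝ (Fin n)) :
    centredGram w r Z x y = ∑ j, w j * (Z x j * Z y j) - r * inner ℝ x y := rfl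

section GaussianMatrix

variable {n p : ℕ} {Q : Matrix (Fin p) (Fin p) ℝ} {w : Fin p → ℝ} {b r : ℝ}

theorem measure_abs_centredGram_tail_le (hQ : Qᵀ * Q = 1) (hb : 0 < b) (hw0 : ∀ j, 0 ≤ w j)
    (hwb : ∀ j, w j ≤ b) (hr : ∑ j, w j = r) {δ : ℝ} (hδ : 0 < δ) (hδ1 : δ ≤ 1)
    (x : EuclideanSpace ℝ (Fin n)) :
    (Measure.pi fun _ : Fin n => Measure.pi fun _ : Fin p => gaussianReal 0 1)
        {G | δ * r * ‖x‖ ^ 2 < |centredGram w r (rotatedCombination Q G) x x|} ≤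
      2 * ENNReal.ofReal (Real.exp (-(δ ^ 2 * r / (16 * b)))) := by
  by_cases hx : x = 0
  · simp [hx]
  have hv : ((‖x‖₊ ^ 2 : NNReal) : ℝ) = ∑ i, x i ^ 2 := by
    simp [EuclideanSpace.norm_sq_eq]
  have hset : {G | δ * r * ‖x‖ ^ 2 < |centredGram w r (rotatedCombination Q G) x x|} =
      (fun (G : Fin n → Fin p → ℝ) (j : Fin p) => ∑ k, Q k j * ∑ i, G i k * x i) ⁻¹'
        {z | δ * r * ((‖x‖₊ ^ 2 : NNReal) : ℝ) <
          |∑ j, w j * (z j ^ 2 - ((‖x‖₊ ^ 2 : NNReal) : ℝ))|} := by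
    ext G
    simp only [Set.mem_ofPred_eq, Set.mem_preimage, centredGram_apply, real_inner_self_eq_norm_sq,
      rotatedCombination, LinearMap.coe_mk, AddHom.coe_mk, NNReal.coe_mul, coe_nnnorm, mul_sub,
      sum_sub_distrib, ← sum_mul, hr, pow_two]
  rw [hset, ← Measure.map_apply (by fun_prop) (measurableSet_lt (by fun_prop) (by fun_prop)),
    map_orthogonal_combination_pi_gaussianReal hQ _ hv]
  exact measure_abs_weighted_sq_sub_tail_le (by simpa using hx) hb hw0 hwb hr hδ hδ1

theorem four_mul_pow_mul_exp_le (hn : 0 < n) :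
    4 * (25 : ℝ) ^ n * Real.exp (-(5 * n)) ≤ 2 * Real.exp (-(n : ℝ)) := by
  have he : (50 : ℝ) ≤ Real.exp 4 := by
    have h1 : (2.7 : ℝ) ≤ Real.exp 1 := by linarith [Real.exp_one_gt_d9]
    calc (50 : ℝ) ≤ 2.7 ^ 4 := by norm_num
      _ ≤ Real.exp 1 ^ 4 := by gcongr
      _ = Real.exp 4 := by rw [← Real.exp_nat_mul]; norm_num
  have h2 : (2 : ℝ) ≤ 2 ^ n := le_self_pow₀ (by norm_num) hn.ne'
  have h50 : 2 * (25 : ℝ) ^ n ≤ Real.exp (4 * n) := by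
    calc 2 * (25 : ℝ) ^ n ≤ 2 ^ n * 25 ^ n := by gcongr
      _ = 50 ^ n := by rw [← mul_pow]; norm_num
      _ ≤ Real.exp 4 ^ n := by gcongr
      _ = Real.exp (4 * n) := by rw [← Real.exp_nat_mul, mul_comm]
  calc 4 * (25 : ℝ) ^ n * Real.exp (-(5 * n))
      = 2 * (2 * (25 : ℝ) ^ n) * Real.exp (-(5 * n)) := by ring
    _ ≤ 2 * Real.exp (4 * n) * Real.exp (-(5 * n)) := by gcongr
    _ = 2 * Real.exp (-(n : ℝ)) := by
        rw [mul_assoc, ← Real.exp_add]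
        congr 2
        ring

/-- Uniform lower bound for `∑ w_j (Qᵀ Gᵀ x)_j²` over the unit sphere. -/
theorem measure_exists_weighted_sq_lt_le (hn : 0 < n) (hQ : Qᵀ * Q = 1) (hb : 0 < b)
    (hw0 : ∀ j, 0 ≤ w j) (hwb : ∀ j, w j ≤ b) (hr : ∑ j, w j = r) (hbr : 2000 * n * b ≤ r) :
    (Measure.pi fun _ : Fin n => Measure.pi fun _ : Fin p => gaussianReal 0 1)
        {G | ∃ x : Fin n → ℝ, ∑ i, x i ^ 2 = 1 ∧
          ∑ j, w j * (∑ k, Q k j * ∑ i, G i k * x i) ^ 2 < r / 16} ≤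
      ENNReal.ofReal (2 * Real.exp (-(n : ℝ))) := by
  set μ := Measure.pi fun _ : Fin n => Measure.pi fun _ : Fin p => gaussianReal 0 1
  have hr0 : 0 ≤ r := hr ▸ sum_nonneg fun j _ => hw0 j
  obtain ⟨s, hcard, hs2, hs⟩ := exists_net_closedBall_two (EuclideanSpace ℝ (Fin n))
  rw [finrank_euclideanSpace_fin] at hcard
  let bad : EuclideanSpace ℝ (Fin n) → Set (Fin n → Fin p → ℝ) := fun x =>
    {G | 1 / 5 * r * ‖x‖ ^ 2 < |centredGram w r (rotatedCombination Q G) x x|}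
  have hbad : ∀ x, μ (bad x) ≤ ENNReal.ofReal (2 * Real.exp (-(5 * n))) := fun x => by
    refine (measure_abs_centredGram_tail_le hQ hb hw0 hwb hr (by norm_num) (by norm_num) x).trans ?_
    rw [ENNReal.ofReal_mul (by norm_num), ENNReal.ofReal_ofNat]
    gcongr
    rw [le_div_iff₀ (by positivity)]
    linarith
  have hsub : {G | ∃ x : Fin n → ℝ, ∑ i, x i ^ 2 = 1 ∧
      ∑ j, w j * (∑ k, Q k j * ∑ i, G i k * x i) ^ 2 < r / 16} ⊆
        ⋃ x ∈ s, ⋃ y ∈ s, bad (x + y) ∪ bad (x - y) := by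
    rintro G ⟨x, hx, hlt⟩
    by_contra hG
    simp only [Set.mem_iUnion, Set.mem_union, not_exists, not_or, bad, Set.mem_ofPred_eq,
      not_lt] at hG
    set B := centredGram w r (rotatedCombination Q G)
    have hsymm : ∀ x y, B x y = B y x := fun x y => by
      simp only [B, centredGram_apply, real_inner_comm, mul_comm]
    have hpair : ∀ x ∈ s, ∀ y ∈ s, |B x y| ≤ 4 / 5 * r := fun x hx y hy => by
      obtain ⟨h1, h2⟩ := hG x hx y hy
      refine (abs_apply_le_of_quadratic B hsymm h1 h2).trans ?_
      have hx4 : ‖x‖ ^ 2 ≤ 2 ^ 2 := by gcongr; exact hs2 x hx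
      have hy4 : ‖y‖ ^ 2 ≤ 2 ^ 2 := by gcongr; exact hs2 y hy
      nlinarith
    have hB := abs_apply_self_le_of_net hs B hpair (WithLp.toLp 2 x)
    have hnorm : ‖WithLp.toLp 2 x‖ ^ 2 = 1 := by simp [EuclideanSpace.norm_sq_eq, hx]
    have happly : B (WithLp.toLp 2 x) (WithLp.toLp 2 x) =
        ∑ j, w j * (∑ k, Q k j * ∑ i, G i k * x i) ^ 2 - r := by
      simp only [B, centredGram_apply, real_inner_self_eq_norm_sq, hnorm, rotatedCombination,
        LinearMap.coe_mk, AddHom.coe_mk, mul_one, pow_two]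
    rw [happly, hnorm, abs_le] at hB
    have hpos : 0 < r := lt_of_lt_of_le (by positivity) hbr
    linarith [hB.1]
  calc _ ≤ μ (⋃ x ∈ s, ⋃ y ∈ s, bad (x + y) ∪ bad (x - y)) := measure_mono hsub
    _ ≤ ∑ x ∈ s, ∑ y ∈ s, (μ (bad (x + y)) + μ (bad (x - y))) :=
        (measure_biUnion_finset_le _ _).trans <| sum_le_sum fun x _ =>
          (measure_biUnion_finset_le _ _).trans <| sum_le_sum fun y _ => measure_union_le _ _
    _ ≤ ∑ x ∈ s, ∑ y ∈ s, (ENNReal.ofReal (2 * Real.exp (-(5 * n))) +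
          ENNReal.ofReal (2 * Real.exp (-(5 * n)))) := by
        gcongr <;> apply hbad
    _ = ENNReal.ofReal (s.card * (s.card * (4 * Real.exp (-(5 * n))))) := by
        rw [← ENNReal.ofReal_add (by positivity) (by positivity)]
        simp only [sum_const, nsmul_eq_mul]
        rw [← ENNReal.ofReal_natCast, ← ENNReal.ofReal_mul (by positivity),
          ← ENNReal.ofReal_mul (by positivity)]
        congr 1
        ring
    _ ≤ ENNReal.ofReal (2 * Real.exp (-(n : ℝ))) := by
        apply ENNReal.ofReal_le_ofReal
        have hc : (s.card : ℝ) ≤ 5 ^ n := by exact_mod_cast hcard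
        calc _ ≤ (5 : ℝ) ^ n * (5 ^ n * (4 * Real.exp (-(5 * n)))) := by gcongr
          _ = 4 * (25 : ℝ) ^ n * Real.exp (-(5 * n)) := by
              rw [show (25 : ℝ) = 5 * 5 by norm_num, mul_pow]; ring
          _ ≤ _ := four_mul_pow_mul_exp_le hn

end GaussianMatrix

theorem sum_sq_covHalf_mulVec {n p : ℕ} {lam : ℕ → ℝ} {Q : Matrix (Fin p) (Fin p) ℝ}
    (hQ : Qᵀ * Q = 1) (hlam : ∀ k, 1 ≤ k → k ≤ p → 0 ≤ lam k)
    (G : Fin n → Fin p → ℝ) (x : Fin n → ℝ) :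
    ∑ j, (∑ i, (covHalf p lam Q).mulVec (G i) j * x i) ^ 2 =
      ∑ j : Fin p, lam (j + 1) * (∑ k, Q k j * ∑ i, G i k * x i) ^ 2 := by
  set h : Fin p → ℝ := fun k => ∑ i, G i k * x i with hh
  set D : Fin p → ℝ := fun j => √(lam (j + 1)) * ∑ k, Q k j * h k with hD
  have hvec : (fun j => ∑ i, (covHalf p lam Q).mulVec (G i) j * x i) = Q *ᵥ D := by
    have h1 : (fun j => ∑ i, (covHalf p lam Q).mulVec (G i) j * x i) = covHalf p lam Q *ᵥ h := by
      ext j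
      simp only [mulVec, dotProduct, hh, sum_mul, mul_sum, mul_assoc]
      exact sum_comm
    rw [h1, covHalf, ← mulVec_mulVec, ← mulVec_mulVec]
    congr 1
    ext j
    rw [mulVec_diagonal]
    simp [mulVec, dotProduct, hD]
  have hnorm : (Q *ᵥ D) ⬝ᵥ (Q *ᵥ D) = D ⬝ᵥ D := by
    rw [dotProduct_mulVec, vecMul_mulVec, hQ, vecMul_one]
  calc _ = (Q *ᵥ D) ⬝ᵥ (Q *ᵥ D) := by
        rw [← hvec]; simp only [dotProduct, pow_two]
    _ = D ⬝ᵥ D := hnorm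
    _ = _ := sum_congr rfl fun j _ => by
        have := Real.mul_self_sqrt (hlam (j + 1) (by omega) (by omega))
        simp only [hD]
        linear_combination (∑ k, Q k j * h k) ^ 2 * this

theorem sum_ite_eq_rsum {p k : ℕ} (lam : ℕ → ℝ) (hk : 1 ≤ k) :
    ∑ j : Fin p, (if k ≤ (j : ℕ) + 1 then lam (j + 1) else 0) = rsum p lam k := by
  rw [Fin.sum_univ_eq_sum_range (fun j => if k ≤ j + 1 then lam (j + 1) else 0), ← sum_filter,
    rsum]
  refine sum_nbij (· + 1) ?_ ?_ ?_ ?_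
  · intro j hj
    simp at hj ⊢
    omega
  · intro i _ j _ h
    simpa using h
  · intro j hj
    refine ⟨j - 1, ?_, ?_⟩ <;> simp at hj ⊢ <;> omega
  · simp

theorem measurableSet_forall_le_enorm2 {n p : ℕ} (a : ℝ) :
    MeasurableSet {M : Fin n → Fin p → ℝ | ∀ x : Fin n → ℝ, enorm2 x = 1 →
      a ≤ enorm2 fun j => ∑ i, M i j * x i} := by
  apply IsClosed.measurableSet
  simp only [Set.ofPred_forall, enorm2]
  refine isClosed_iInter fun x => isClosed_iInter fun _ => isClosed_le ?_ ?_ <;> fun_prop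

theorem le_sminFn {n p : ℕ} (hn : 0 < n) {M : Fin n → Fin p → ℝ} {a : ℝ}
    (h : ∀ x : Fin n → ℝ, enorm2 x = 1 → a ≤ enorm2 fun j => ∑ i, M i j * x i) :
    a ≤ sminFn M := by
  refine le_csInf ⟨_, Pi.single ⟨0, hn⟩ 1, ?_, rfl⟩ ?_
  · simp [enorm2, Pi.single_apply]
  · rintro _ ⟨x, hx, rfl⟩
    exact h x hx

/-- Lemma 2: there is an absolute constant `c > 0` such that, if the
constant `c₀` in the definition of `k*` satisfies `c₀ ≥ c`, then for a random `n × p`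
matrix `X` (`p ≥ n`) with i.i.d. `N(0,Σ)` rows, `Σ` of rank at least `n`, with
probability at least `1 - 2e^{-n}` one has `σ_n(X) ≥ √(r_{k*}(Σ))/4`. -/
theorem stmt6 :
    ∃ c > (0 : ℝ), ∀ c0 : ℝ, c ≤ c0 →
    ∀ (n p : ℕ), 0 < n → n ≤ p →
    ∀ (lam : ℕ → ℝ) (Porth Sig : Matrix (Fin p) (Fin p) ℝ),
      (∀ k, 1 ≤ k → k ≤ p → 0 ≤ lam k) →
      (∀ j k, 1 ≤ j → j ≤ k → k ≤ p → lam k ≤ lam j) →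
      Porth * Porthᵀ = 1 →
      Sig = Porth * Matrix.diagonal (fun i : Fin p => lam ((i : ℕ) + 1)) * Porthᵀ →
      n ≤ Sig.rank →
    ∀ (Ω : Type) (_ : MeasurableSpace Ω) (P : Measure Ω), IsProbabilityMeasure P →
    ∀ (X : Ω → Fin n → Fin p → ℝ),
      Measure.map X P = (Measure.pi fun _ : Fin n => mvGaussian p lam Porth) →
      (kstarSet p lam c0 n).Nonempty →
      ENNReal.ofReal (1 - 2 * Real.exp (-(n : ℝ))) ≤
        P {ω | Real.sqrt (rsum p lam (kstar p lam c0 n)) / 4 ≤ sminFn (X ω)} := by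
  refine ⟨2000, by norm_num, ?_⟩
  intro c0 hc0 n p hn hnp lam Q Sig hlam hmono hQ _ _ Ω _ P _ X hX hne
  have hQ' : Qᵀ * Q = 1 := mul_eq_one_comm.1 hQ
  obtain ⟨hk1, hkp, hk⟩ : kstar p lam c0 n ∈ kstarSet p lam c0 n := Nat.sInf_mem hne
  set k := kstar p lam c0 n
  set r := rsum p lam k with hr
  have hn0 : (0 : ℝ) < n := by exact_mod_cast hn
  have hpos : 0 < lam k := by
    refine lt_of_le_of_ne (hlam k hk1 hkp) fun h0 => ?_
    rw [← h0, div_zero] at hk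
    nlinarith
  have hbr : 2000 * n * lam k ≤ r := by
    rw [le_div_iff₀ hpos] at hk
    exact le_trans (by gcongr) hk
  let w : Fin p → ℝ := fun j => if k ≤ (j : ℕ) + 1 then lam (j + 1) else 0
  have hlamj : ∀ j : Fin p, 0 ≤ lam (j + 1) := fun j => hlam _ (by omega) (by omega)
  have hw0 : ∀ j, 0 ≤ w j := fun j => by
    simp only [w]
    split_ifs
    exacts [hlamj j, le_rfl]
  have hwb : ∀ j, w j ≤ lam k := fun j => by
    simp only [w]
    split_ifs with h
    exacts [hmono _ _ hk1 h (by omega), hpos.le]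
  have hwlam : ∀ j : Fin p, w j ≤ lam (j + 1) := fun j => by
    simp only [w]
    split_ifs
    exacts [le_rfl, hlamj j]
  set μ := Measure.pi fun _ : Fin n => Measure.pi fun _ : Fin p => gaussianReal 0 1 with hμ
  let T : (Fin n → Fin p → ℝ) → Fin n → Fin p → ℝ := fun G i => (covHalf p lam Q).mulVec (G i)
  have hT : Measurable T := Continuous.measurable (by fun_prop)
  have hlaw : Measure.map X P = μ.map T := by
    have hprob : IsProbabilityMeasure
        ((Measure.pi fun _ : Fin p => gaussianReal 0 1).map ((covHalf p lam Q).mulVec ·)) :=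
      Measure.isProbabilityMeasure_map (by fun_prop)
    rw [hX, hμ, Measure.pi_map_pi (f := fun _ g => (covHalf p lam Q).mulVec g)
      fun _ => by fun_prop]
    rfl
  have hprob : IsProbabilityMeasure (Measure.map X P) := by
    rw [hlaw]
    exact Measure.isProbabilityMeasure_map hT.aemeasurable
  have hXm : AEMeasurable X P := AEMeasurable.of_map_ne_zero (IsProbabilityMeasure.ne_zero _)
  let good : Set (Fin n → Fin p → ℝ) := {M | ∀ x : Fin n → ℝ, enorm2 x = 1 →
    √r / 4 ≤ enorm2 fun j => ∑ i, M i j * x i}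
  have hgood : MeasurableSet good := measurableSet_forall_le_enorm2 _
  have hbad := measure_exists_weighted_sq_lt_le hn hQ' hpos hw0 hwb (sum_ite_eq_rsum lam hk1) hbr
  have hcompl : (T ⁻¹' good)ᶜ ⊆
      {G | ∃ x : Fin n → ℝ, ∑ i, x i ^ 2 = 1 ∧
        ∑ j, w j * (∑ k, Q k j * ∑ i, G i k * x i) ^ 2 < r / 16} := by
    intro G hG
    simp only [good, Set.mem_compl_iff, Set.mem_preimage, Set.mem_ofPred_eq, not_forall,
      not_le] at hG
    obtain ⟨x, hx, hlt⟩ := hG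
    refine ⟨x, Real.sqrt_eq_one.1 hx, ?_⟩
    have h16 : √r / 4 = √(r / 16) := by
      rw [Real.sqrt_div' _ (by norm_num), show (16 : ℝ) = 4 ^ 2 by norm_num,
        Real.sqrt_sq (by norm_num)]
    rw [h16, enorm2, sum_sq_covHalf_mulVec hQ' hlam] at hlt
    refine lt_of_le_of_lt (sum_le_sum fun j _ => ?_) (lt_of_not_ge fun h => (Real.sqrt_le_sqrt h).not_gt hlt)
    gcongr
    exact hwlam j
  calc ENNReal.ofReal (1 - 2 * Real.exp (-(n : ℝ)))
      = 1 - ENNReal.ofReal (2 * Real.exp (-(n : ℝ))) := by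
        rw [ENNReal.ofReal_sub _ (by positivity), ENNReal.ofReal_one]
    _ ≤ 1 - μ (T ⁻¹' good)ᶜ :=
        tsub_le_tsub_left ((measure_mono hcompl).trans hbad) _
    _ = μ (T ⁻¹' good) := by
        rw [← prob_compl_eq_one_sub (MeasurableSet.compl
          (hT hgood)), compl_compl]
    _ = P (X ⁻¹' good) := by
        rw [← Measure.map_apply_of_aemeasurable hXm hgood, hlaw,
          Measure.map_apply hT hgood]
    _ ≤ _ := measure_mono fun ω hω => le_sminFn hn hω
end
end
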